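/- arXiv:1901.05143 — 2 statements merged into one kernel-verified Lean document; each statement's English description precedes it below -/
import Mathlib

section
/- Assume (H1). For any λ ∈ (0,α), the entire solution u_∞(x,t;λ) = lim_{j→∞} u₀(x + ℓ(j,λ), t + jT) of (E) is either a positive T-periodic solution of the ODE ω' = f(t,ω) (i.e., independent of x and T-periodic in t) or a pulsating traveling front of (E). -/
/-!
Write `u₀` for the solution with Heaviside datum, `ωα` for the periodic solution above it, and
`V` for the limit of its shifts.

*Steepness.* If `W` is any solution with `0 ≤ W ≤ ωα`, then `u₀ - W` changes sign at most once in
`x`, from `+` to `-` (`sign_pattern`). Instead of zero-number theory, the product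
`(W - u₀)⁺(x, t) (u₀ - W)⁺(y, t)` is used: on `{x < y}` it is a subsolution of a linear parabolic
equation in two space variables, it vanishes on the diagonal and, because the datum of `u₀` is
extremal on each side of the origin, at time `0`; so it vanishes (`max_principle`). The property
passes to the limit: `V` is steeper than every entire solution between `0` and `ωα`. Applied to
the space-time translates of `V` itself, it shows that for each time `t` and each shift `a` the
profiles `V(·, t)` and `V(· + a, t + T)` are ordered (`limit_ordered`).

*No escape.* The level `lam` of `u₀` moves with speed at most `1 + K`, where `K` is a Lipschitz
constant of the nonlinearity, by comparison with `exp(±x + (1 + K)t)`. Hence `V(·, T)` cannot lie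
entirely below or entirely above `lam = V(0, 0)` (`not_forall_lt`, `not_forall_gt`).

*Dichotomy.* `V` is nonincreasing in `x`, so by the strong maximum principle it is either
independent of `x` or strictly decreasing at time `0` (`strictAnti_or_const`). In the first case
`V` solves the ODE and takes the value `lam` at times `0` and `T`, so it is periodic, and positive
by uniqueness. In the second case the shifts `a` with `V(· + a, T) ≤ V(·, 0)` and those with the
opposite inequality form two closed nonempty sets covering the line; a common element `a` gives
`V(·, 0) = V(· + a, T)`, and then `V(x, t) = V(x + a, t + T)` for all times (`exists_shift`). The
limits of `V` as `x → ±∞` exist by monotonicity, solve the ODE and are attained locally uniformly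
in time (`limit_atBot`), so `V` is a pulsating front.
-/

open Real Filter Topology Set

noncomputable section

/-- `u` is a classical solution of `u_t = u_xx + f(t,u)` on `ℝ × I`. -/
def IsSolOn (f : ℝ → ℝ → ℝ) (u : ℝ → ℝ → ℝ) (I : Set ℝ) : Prop :=
  ∃ ut ux uxx : ℝ → ℝ → ℝ,
    (∀ x : ℝ, ∀ t ∈ I, HasDerivAt (fun s => u x s) (ut x t) t) ∧
    (∀ x : ℝ, ∀ t ∈ I, HasDerivAt (fun y => u y t) (ux x t) x) ∧
    (∀ x : ℝ, ∀ t ∈ I, HasDerivAt (fun y => ux y t) (uxx x t) x) ∧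
    ContinuousOn (fun p : ℝ × ℝ => ut p.1 p.2) (Set.univ ×ˢ I) ∧
    ContinuousOn (fun p : ℝ × ℝ => ux p.1 p.2) (Set.univ ×ˢ I) ∧
    ContinuousOn (fun p : ℝ × ℝ => uxx p.1 p.2) (Set.univ ×ˢ I) ∧
    (∀ x : ℝ, ∀ t ∈ I, ut x t = uxx x t + f t (u x t))

/-- `u₁` is steeper than `u₂` (Definition 2.5). -/
def Steeper (T : ℝ) (u₁ u₂ : ℝ → ℝ → ℝ) : Prop :=
  ∀ (t' x₁ : ℝ) (k : ℤ), u₁ x₁ t' = u₂ x₁ (t' + k * T) →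
    (∀ x t : ℝ, u₁ x (t + t') = u₂ x (t + t' + k * T)) ∨
    deriv (fun y => u₁ y t') x₁ < deriv (fun y => u₂ y (t' + k * T)) x₁

/-- `ψ` is a `T`-periodic solution of the ODE `ω' = f(t,ω)`. -/
def IsPeriodicSol (f : ℝ → ℝ → ℝ) (T : ℝ) (ψ : ℝ → ℝ) : Prop :=
  (∀ t : ℝ, HasDerivAt ψ (f t (ψ t)) t) ∧ ∀ t : ℝ, ψ (t + T) = ψ t

/-- `ψ` is isolated from below w.r.t. the ODE. -/
def IsolatedFromBelow (f : ℝ → ℝ → ℝ) (T : ℝ) (ψ : ℝ → ℝ) : Prop :=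
  ¬ ∃ φ : ℕ → ℝ → ℝ, (∀ n, IsPeriodicSol f T (φ n)) ∧ (∀ n t, φ n t < ψ t) ∧
      TendstoUniformly φ ψ atTop

/-- `ψ` is stable from below w.r.t. the ODE. -/
def StableFromBelow (f : ℝ → ℝ → ℝ) (ψ : ℝ → ℝ) : Prop :=
  ∀ ε > 0, ∃ δ > 0, ∀ g : ℝ → ℝ, (∀ t : ℝ, HasDerivAt g (f t (g t)) t) →
    g 0 ∈ Set.Icc (ψ 0 - δ) (ψ 0) → ∀ t ≥ 0, |g t - ψ t| ≤ ε

/-- Hypothesis (H1). -/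
def HypH1 (f : ℝ → ℝ → ℝ) (α : ℝ) (ωα : ℝ → ℝ) : Prop :=
  ∃ u : ℝ → ℝ → ℝ,
    IsSolOn f u (Set.Ioi 0) ∧
    ContinuousOn (fun p : ℝ × ℝ => u p.1 p.2) (Set.univ ×ˢ Set.Ici 0) ∧
    HasCompactSupport (fun x => u x 0) ∧
    (∀ x : ℝ, 0 ≤ u x 0 ∧ u x 0 < α) ∧
    (∀ K : Set ℝ, IsCompact K → ∀ ε > 0, ∃ t₀ : ℝ, ∀ t ≥ t₀, ∀ x ∈ K, |u x t - ωα t| < ε)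

/-- Hypothesis (H2). -/
def HypH2 (f : ℝ → ℝ → ℝ) (T α : ℝ) : Prop :=
  ∀ ψ : ℝ → ℝ, IsPeriodicSol f T ψ → ψ 0 ∈ Set.Ioo 0 α →
    IsolatedFromBelow f T ψ → ¬ StableFromBelow f ψ →
    ∃ φ : ℕ → ℝ → ℝ,
      (∀ n, ContDiff ℝ 1 (φ n)) ∧
      (∀ n t, φ n (t + T) = φ n t) ∧
      (∀ n t, f t (φ n t) ≤ deriv (φ n) t) ∧
      (∀ n t, φ n t < ψ t) ∧
      TendstoUniformly φ ψ atTop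

/-- The solution `ũ(·,·;a)` of (E) with Heaviside-type initial datum `α·H(a−x)`,
bounded between `0` and `ω(α,·)`. -/
def IsHeavisideSol (f : ℝ → ℝ → ℝ) (α a : ℝ) (ωα : ℝ → ℝ) (u : ℝ → ℝ → ℝ) : Prop :=
  IsSolOn f u (Set.Ioi 0) ∧
  (∀ x : ℝ, ∀ t > 0, 0 ≤ u x t ∧ u x t ≤ ωα t) ∧
  ∀ K : Set ℝ, IsCompact K → a ∉ K → ∀ ε > 0, ∃ δ > 0, ∀ t ∈ Set.Ioo (0:ℝ) δ, ∀ x ∈ K,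
    |u x t - α * (if 0 ≤ a - x then 1 else 0)| < ε

/-- `U(x,t) → ψ(t)` as `x → +∞`, locally uniformly in `t`. -/
def LimitAtPlusInf (U : ℝ → ℝ → ℝ) (ψ : ℝ → ℝ) : Prop :=
  ∀ K : Set ℝ, IsCompact K → ∀ ε > 0, ∃ M : ℝ, ∀ x ≥ M, ∀ t ∈ K, |U x t - ψ t| < ε

/-- `U(x,t) → ψ(t)` as `x → −∞`, locally uniformly in `t`. -/
def LimitAtMinusInf (U : ℝ → ℝ → ℝ) (ψ : ℝ → ℝ) : Prop :=
  ∀ K : Set ℝ, IsCompact K → ∀ ε > 0, ∃ M : ℝ, ∀ x ≤ M, ∀ t ∈ K, |U x t - ψ t| < ε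

/-- `U` connects `ωa` (at `x = −∞`) to `ωb` (at `x = +∞`). -/
def Connects (U : ℝ → ℝ → ℝ) (ωa ωb : ℝ → ℝ) : Prop :=
  LimitAtMinusInf U ωa ∧ LimitAtPlusInf U ωb

/-- A pulsating traveling front of (E) with speed `c`, limit `ωa` at `−∞`, `ωb` at `+∞`. -/
def IsPulsatingFront (f : ℝ → ℝ → ℝ) (T : ℝ) (ωa ωb : ℝ → ℝ) (U : ℝ → ℝ → ℝ) (c : ℝ) :
    Prop :=
  IsSolOn f U Set.univ ∧
  (∃ L : ℝ, c = L / T ∧ ∀ x t : ℝ, U x t = U (x - L) (t + T)) ∧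
  Connects U ωa ωb

/-- A propagating terrace of (E) connecting `0` to `ωα`. -/
def IsTerrace (f : ℝ → ℝ → ℝ) (T : ℝ) (ωα : ℝ → ℝ) (N : ℕ)
    (ω : ℕ → ℝ → ℝ) (U : ℕ → ℝ → ℝ → ℝ) (c : ℕ → ℝ) : Prop :=
  1 ≤ N ∧
  (∀ k ≤ N, IsPeriodicSol f T (ω k)) ∧
  (∀ t, ω 0 t = ωα t) ∧ (∀ t, ω N t = 0) ∧
  (∀ k, k < N → ∀ t, ω (k + 1) t < ω k t) ∧
  (∀ k, 1 ≤ k → k ≤ N → IsPulsatingFront f T (ω (k - 1)) (ω k) (U k) (c k)) ∧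
  0 ≤ c 1 ∧ (∀ k, 1 ≤ k → k < N → c k ≤ c (k + 1))

/-- A minimal propagating terrace (Definition 1.4). -/
def IsMinimalTerrace (f : ℝ → ℝ → ℝ) (T : ℝ) (ωα : ℝ → ℝ) (N : ℕ)
    (ω : ℕ → ℝ → ℝ) (U : ℕ → ℝ → ℝ → ℝ) (c : ℕ → ℝ) : Prop :=
  IsTerrace f T ωα N ω U c ∧
  (∀ (N' : ℕ) (ψ : ℕ → ℝ → ℝ) (V : ℕ → ℝ → ℝ → ℝ) (c' : ℕ → ℝ),
      IsTerrace f T ωα N' ψ V c' → ∀ k ≤ N, ∃ j ≤ N', ∀ t, ω k t = ψ j t) ∧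
  (∀ k, 1 ≤ k → k ≤ N → ∀ V : ℝ → ℝ → ℝ, IsSolOn f V Set.univ →
      Connects V (ω (k - 1)) (ω k) → Steeper T (U k) V)


/-- `V` is the locally uniform limit of the shifted solutions `u(· + ℓ j, · + jT)`. -/
def IsULimit (u : ℝ → ℝ → ℝ) (ℓ : ℕ → ℝ) (T : ℝ) (V : ℝ → ℝ → ℝ) : Prop :=
  ∀ K : Set (ℝ × ℝ), IsCompact K → ∀ ε > 0, ∃ J : ℕ, ∀ j ≥ J, ∀ p ∈ K,
    |u (p.1 + ℓ j) (p.2 + (j : ℝ) * T) - V p.1 p.2| < ε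

/-! ### Second derivatives and the maximum principle -/

/-- `g` is differentiable near `x` and its derivative is differentiable at `x` with derivative
`d`, i.e. `g''(x) = d`. -/
def HasD2 (g : ℝ → ℝ) (d x : ℝ) : Prop :=
  ∃ g' : ℝ → ℝ, (∀ᶠ z in 𝓝 x, HasDerivAt g (g' z) z) ∧ HasDerivAt g' d x

lemma HasD2.congr {g h : ℝ → ℝ} {d x : ℝ} (hg : HasD2 g d x) (e : h =ᶠ[𝓝 x] g) :
    HasD2 h d x := by
  obtain ⟨g', h1, h2⟩ := hg
  refine ⟨g', ?_, h2⟩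
  filter_upwards [h1, e.eventuallyEq_nhds] with z hz1 hz2
  exact hz1.congr_of_eventuallyEq hz2

lemma HasD2.sub {g h : ℝ → ℝ} {d e x : ℝ} (hg : HasD2 g d x) (hh : HasD2 h e x) :
    HasD2 (fun z => g z - h z) (d - e) x := by
  obtain ⟨g', h1, h2⟩ := hg
  obtain ⟨h', h3, h4⟩ := hh
  refine ⟨fun z => g' z - h' z, ?_, h2.sub h4⟩
  filter_upwards [h1, h3] with z hz1 hz2
  exact hz1.sub hz2

lemma HasD2.const_mul {g : ℝ → ℝ} {d x : ℝ} (c : ℝ) (hg : HasD2 g d x) :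
    HasD2 (fun z => c * g z) (c * d) x := by
  obtain ⟨g', h1, h2⟩ := hg
  refine ⟨fun z => c * g' z, ?_, h2.const_mul c⟩
  filter_upwards [h1] with z hz1
  exact hz1.const_mul c

lemma HasD2.add {g h : ℝ → ℝ} {d e x : ℝ} (hg : HasD2 g d x) (hh : HasD2 h e x) :
    HasD2 (fun z => g z + h z) (d + e) x := by
  obtain ⟨g', h1, h2⟩ := hg
  obtain ⟨h', h3, h4⟩ := hh
  refine ⟨fun z => g' z + h' z, ?_, h2.add h4⟩
  filter_upwards [h1, h3] with z hz1 hz2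
  exact hz1.add hz2

lemma HasD2.const (c x : ℝ) : HasD2 (fun _ => c) 0 x :=
  ⟨fun _ => 0, Eventually.of_forall fun z => hasDerivAt_const z c, hasDerivAt_const x 0⟩

lemma HasD2.nonpos_of_isLocalMax {g : ℝ → ℝ} {d x : ℝ} (hg : HasD2 g d x)
    (hm : IsLocalMax g x) : d ≤ 0 := by
  by_contra hd
  push Not at hd
  obtain ⟨g', h1, h2⟩ := hg
  have e1 : deriv g =ᶠ[𝓝 x] g' := by
    filter_upwards [h1] with z hz using hz.deriv
  have e2 : deriv (deriv g) x = d := by rw [e1.deriv_eq]; exact h2.deriv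
  have hmin : IsLocalMin g x :=
    isLocalMin_of_deriv_deriv_pos (by rw [e2]; exact hd) hm.deriv_eq_zero
      h1.self_of_nhds.continuousAt
  have e3 : g =ᶠ[𝓝 x] fun _ => g x := by
    filter_upwards [hm, hmin] with z hz1 hz2
    exact le_antisymm hz1 hz2
  have e4 : deriv g =ᶠ[𝓝 x] deriv (fun _ => g x) := e3.deriv
  have e5 : deriv (deriv g) x = 0 := by rw [e4.deriv_eq]; simp
  linarith

/-- The Gaussian `(t+s)^{-1/2} exp(-x²/(4(t+s)))`, a multiple of the heat kernel started at time
`-s`. -/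
def gker (s x t : ℝ) : ℝ := (√(t + s))⁻¹ * exp (-(x ^ 2) / (4 * (t + s)))

lemma gker_nonneg (s x t : ℝ) : 0 ≤ gker s x t := by unfold gker; positivity

lemma gker_hasDerivAt_x {s t : ℝ} (x : ℝ) (h : 0 < t + s) :
    HasDerivAt (fun z => gker s z t) (gker s x t * (-x / (2 * (t + s)))) x := by
  have h1 : HasDerivAt (fun z : ℝ => -(z ^ 2) / (4 * (t + s))) (-(2 * x) / (4 * (t + s))) x := by
    simpa using ((hasDerivAt_pow 2 x).neg).div_const (4 * (t + s))
  refine (h1.exp.const_mul (√(t + s))⁻¹).congr_deriv ?_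
  unfold gker
  field_simp
  ring

lemma gker_heat {s t : ℝ} (x : ℝ) (h : 0 < t + s) :
    ∃ d, HasDerivAt (fun r => gker s x r) d t ∧ HasD2 (fun z => gker s z t) d x := by
  refine ⟨gker s x t * (x ^ 2 / (4 * (t + s) ^ 2) - 1 / (2 * (t + s))), ?_, ?_⟩
  · have h0 : HasDerivAt (fun r : ℝ => r + s) 1 t := (hasDerivAt_id t).add_const s
    have h1 : HasDerivAt (fun r : ℝ => -(x ^ 2) / (4 * (r + s)))
        ((0 * (4 * (t + s)) - (-(x ^ 2)) * (4 * 1)) / (4 * (t + s)) ^ 2) t :=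
      (hasDerivAt_const t (-(x ^ 2))).div (h0.const_mul 4) (by positivity)
    have h2 : HasDerivAt (fun r : ℝ => (√(r + s))⁻¹)
        (-(1 / (2 * √(t + s))) / √(t + s) ^ 2) t := (h0.sqrt h.ne').inv (by positivity)
    refine (h2.mul h1.exp).congr_deriv ?_
    unfold gker
    have hs : √(t + s) ^ 2 = t + s := Real.sq_sqrt h.le
    have hs0 : 0 < √(t + s) := by positivity
    generalize √(t + s) = q at *
    rw [← hs]
    field_simp
    ring
  · refine ⟨fun z => gker s z t * (-z / (2 * (t + s))),
      Eventually.of_forall fun z => gker_hasDerivAt_x z h, ?_⟩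
    have h1 : HasDerivAt (fun z : ℝ => -z / (2 * (t + s))) (-1 / (2 * (t + s))) x :=
      (hasDerivAt_id x).neg.div_const _
    refine ((gker_hasDerivAt_x x h).mul h1).congr_deriv ?_
    field_simp
    ring

lemma HasD2.comp_sub {g : ℝ → ℝ} {d x a : ℝ} (hg : HasD2 g d (x - a)) :
    HasD2 (fun z => g (z - a)) d x := by
  obtain ⟨g', h1, h2⟩ := hg
  refine ⟨fun z => g' (z - a), ?_, h2.comp_sub_const x a⟩
  have : Tendsto (fun z : ℝ => z - a) (𝓝 x) (𝓝 (x - a)) := (continuous_sub_right a).tendsto x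
  filter_upwards [this.eventually h1] with z hz
  exact hz.comp_sub_const z a

lemma gker_continuousOn (s a : ℝ) (hs : 0 < s) :
    ContinuousOn (fun q : ℝ × ℝ × ℝ => gker s (q.1 - a) q.2.2) {q | 0 ≤ q.2.2} := by
  unfold gker
  have h : ∀ q ∈ {q : ℝ × ℝ × ℝ | 0 ≤ q.2.2}, 0 < q.2.2 + s := fun q hq => by
    have : 0 ≤ q.2.2 := hq
    linarith
  refine ContinuousOn.mul (ContinuousOn.inv₀ (by fun_prop) ?_)
    (Real.continuous_exp.comp_continuousOn (ContinuousOn.div (by fun_prop) (by fun_prop) ?_))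
  · intro q hq; have := h q hq; positivity
  · intro q hq; have := h q hq; positivity

/-- The singular-point barrier: near `(0,0)` at parabolic scale `δ`, the function
`4 δ · gker δ²` is at least one. -/
lemma one_le_gker {δ x t : ℝ} (hδ : 0 < δ) (hx : |x| ≤ δ) (ht : 0 ≤ t) (htδ : t ≤ δ ^ 2) :
    1 ≤ 4 * δ * gker (δ ^ 2) x t := by
  unfold gker
  have h1 : √(t + δ ^ 2) ≤ 2 * δ := by
    rw [Real.sqrt_le_left (by positivity)]
    nlinarith
  have h0 : 0 < t + δ ^ 2 := by positivity
  have h2 : (2 * δ)⁻¹ ≤ (√(t + δ ^ 2))⁻¹ := by gcongr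
  have hx2 : x ^ 2 ≤ δ ^ 2 := sq_le_sq' (by linarith [abs_le.1 hx]) (abs_le.1 hx).2
  have h3 : (1 / 2 : ℝ) ≤ exp (-(x ^ 2) / (4 * (t + δ ^ 2))) := by
    have h4 : -(1 / 4 : ℝ) ≤ -(x ^ 2) / (4 * (t + δ ^ 2)) := by
      rw [le_div_iff₀ (by positivity)]
      nlinarith
    have := Real.add_one_le_exp (-(x ^ 2) / (4 * (t + δ ^ 2)))
    linarith
  calc (1 : ℝ) = 4 * δ * ((2 * δ)⁻¹ * (1 / 2)) := by field_simp; norm_num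
    _ ≤ _ := by gcongr

/-- A maximum over earlier times forces a nonnegative time derivative. -/
lemma deriv_nonneg_of_left_max {g : ℝ → ℝ} {d t s : ℝ} (hst : s < t) (hg : HasDerivAt g d t)
    (hm : ∀ r ∈ Icc s t, g r ≤ g t) : 0 ≤ d := by
  have h1 : HasDerivWithinAt g d (Iic t) t := hg.hasDerivWithinAt
  have h2 := (hasDerivWithinAt_iff_tendsto_slope.1 h1)
  refine ge_of_tendsto (x := 𝓝[Iio t] t) (f := slope g t) ?_ ?_
  · convert h2 using 2; ext z; simp [lt_iff_le_and_ne]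
  · filter_upwards [Ioo_mem_nhdsLT hst] with r hr
    rw [slope_def_field]
    exact div_nonneg_of_nonpos (by linarith [hm r ⟨hr.1.le, hr.2.le⟩]) (by linarith [hr.2])

/-- Maximum principle in the plane for functions bounded above. The equation is only required
where `p > 0`, the initial inequality may fail at the two abscissae `a` and `b`. -/
lemma max_principle {τ K M a b : ℝ} (hK : 0 ≤ K) {p : ℝ → ℝ → ℝ → ℝ}
    (hcont : ContinuousOn (fun q : ℝ × ℝ × ℝ => p q.1 q.2.1 q.2.2) {q | 0 < q.2.2})
    (hbd : ∀ x y t, 0 < t → t ≤ τ → p x y t ≤ M)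
    (hder : ∀ x y t, 0 < t → t ≤ τ → 0 < p x y t → ∃ pt pxx pyy,
      HasDerivAt (fun s => p x y s) pt t ∧ HasD2 (fun z => p z y t) pxx x ∧
      HasD2 (fun z => p x z t) pyy y ∧ pt ≤ pxx + pyy + K * p x y t)
    (hinit : ∀ R > 0, ∀ η > 0, ∀ δ > 0, ∃ t₀ > 0, ∀ t, 0 < t → t < t₀ → ∀ x y, |x| ≤ R →
      |y| ≤ R → δ ≤ |x - a| → δ ≤ |x - b| → p x y t ≤ η) :
    ∀ x y t, 0 < t → t ≤ τ → p x y t ≤ 0 := by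
  have hM' : 0 ≤ max M 0 := le_max_right _ _
  set M' := max M 0 with hM'def
  have hbd' : ∀ x y t, 0 < t → t ≤ τ → p x y t ≤ M' := fun x y t h1 h2 =>
    (hbd x y t h1 h2).trans (le_max_left _ _)
  -- `Ψ ε` is a strict supersolution of the heat equation dominating `exp(-K t) p` near `t = 0`
  -- and near infinity.
  set Ψ : ℝ → ℝ → ℝ → ℝ → ℝ := fun ε x y t =>
    ε + ε * (x ^ 2 + y ^ 2 + 5 * t) + M' * (4 * ε) * gker (ε ^ 2) (x - a) t +
      M' * (4 * ε) * gker (ε ^ 2) (x - b) t with hΨ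
  have key : ∀ ε > 0, ∀ x y t, 0 < t → t ≤ τ → exp (-K * t) * p x y t ≤ Ψ ε x y t := by
    intro ε hε x₁ y₁ t₁ ht₁ ht₁τ
    by_contra hcon
    push Not at hcon
    have hΨlow : ∀ x y t, 0 < t → ε ≤ Ψ ε x y t ∧ ε * (x ^ 2 + y ^ 2) ≤ Ψ ε x y t ∧
        M' * (4 * ε * gker (ε ^ 2) (x - a) t) ≤ Ψ ε x y t ∧
        M' * (4 * ε * gker (ε ^ 2) (x - b) t) ≤ Ψ ε x y t := by
      intro x y t ht
      have h1 := mul_nonneg (mul_nonneg hM' (by positivity : 0 ≤ 4 * ε))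
        (gker_nonneg (ε ^ 2) (x - a) t)
      have h2 := mul_nonneg (mul_nonneg hM' (by positivity : 0 ≤ 4 * ε))
        (gker_nonneg (ε ^ 2) (x - b) t)
      have h3 : 0 ≤ ε * (x ^ 2 + y ^ 2) := by positivity
      have h4 : 0 ≤ ε * (5 * t) := by positivity
      simp only [hΨ]
      refine ⟨?_, ?_, ?_, ?_⟩ <;> nlinarith
    have hexp : ∀ c x y t, 0 < t → 0 ≤ c → p x y t ≤ c → exp (-K * t) * p x y t ≤ c := by
      intro c x y t ht hc hp
      have h1 : exp (-K * t) ≤ 1 := by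
        rw [Real.exp_le_one_iff]; nlinarith [mul_nonneg hK ht.le]
      have h2 := Real.exp_pos (-K * t)
      nlinarith
    set R := M' / ε + 1 with hR
    have hR1 : 1 ≤ R := by have : 0 ≤ M' / ε := by positivity
                           linarith
    have hRM : M' ≤ ε * R ^ 2 := by
      have : M' = ε * (R - 1) := by rw [hR]; field_simp; ring
      rw [this]
      have : R - 1 ≤ R ^ 2 := by nlinarith
      gcongr
    have hfar : ∀ x y t, 0 < t → t ≤ τ → (R ≤ |x| ∨ R ≤ |y|) →
        exp (-K * t) * p x y t ≤ Ψ ε x y t := by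
      intro x y t ht htτ h
      refine (hexp M' x y t ht hM' (hbd' x y t ht htτ)).trans (hRM.trans
        (le_trans ?_ (hΨlow x y t ht).2.1))
      have hR2 : R ^ 2 ≤ x ^ 2 + y ^ 2 := by
        rcases h with h | h
        · have : R ^ 2 ≤ |x| ^ 2 := by gcongr
          rw [sq_abs] at this; nlinarith [sq_nonneg y]
        · have : R ^ 2 ≤ |y| ^ 2 := by gcongr
          rw [sq_abs] at this; nlinarith [sq_nonneg x]
      gcongr
    obtain ⟨t₀, ht₀, hin⟩ := hinit R (by linarith) ε hε ε hε
    have hearly : ∀ x y t, 0 < t → t ≤ τ → t < t₀ → t ≤ ε ^ 2 → |x| ≤ R → |y| ≤ R →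
        exp (-K * t) * p x y t ≤ Ψ ε x y t := by
      intro x y t ht htτ htt₀ htε hx hy
      obtain ⟨l1, l2, l3, l4⟩ := hΨlow x y t ht
      by_cases ha : ε ≤ |x - a|
      · by_cases hb : ε ≤ |x - b|
        · exact (hexp ε x y t ht hε.le (hin t ht htt₀ x y hx hy ha hb)).trans l1
        · refine (hexp M' x y t ht hM' (hbd' x y t ht htτ)).trans (le_trans ?_ l4)
          have := one_le_gker hε (le_of_not_ge hb) ht.le htε
          nlinarith
      · refine (hexp M' x y t ht hM' (hbd' x y t ht htτ)).trans (le_trans ?_ l3)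
        have := one_le_gker hε (le_of_not_ge ha) ht.le htε
        nlinarith
    set t₂ := min (min t₀ (ε ^ 2)) t₁ / 2 with ht₂
    have hmpos : 0 < min (min t₀ (ε ^ 2)) t₁ := by positivity
    have ht₂0 : 0 < t₂ := by positivity
    have hlt : t₂ < min (min t₀ (ε ^ 2)) t₁ := by rw [ht₂]; linarith
    have ht₂t₀ : t₂ < t₀ := hlt.trans_le ((min_le_left _ _).trans (min_le_left _ _))
    have ht₂ε : t₂ ≤ ε ^ 2 := hlt.le.trans ((min_le_left _ _).trans (min_le_right _ _))
    have ht₂t₁ : t₂ < t₁ := hlt.trans_le (min_le_right _ _)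
    have hx₁ : |x₁| < R := by
      by_contra h; exact absurd (hfar x₁ y₁ t₁ ht₁ ht₁τ (Or.inl (le_of_not_gt h))) (not_le.2 hcon)
    have hy₁ : |y₁| < R := by
      by_contra h; exact absurd (hfar x₁ y₁ t₁ ht₁ ht₁τ (Or.inr (le_of_not_gt h))) (not_le.2 hcon)
    set Q : Set (ℝ × ℝ × ℝ) := Icc (-R) R ×ˢ Icc (-R) R ×ˢ Icc t₂ τ with hQ
    have hQc : IsCompact Q := isCompact_Icc.prod (isCompact_Icc.prod isCompact_Icc)
    have hQsub : Q ⊆ {q | 0 < q.2.2} := fun q hq => lt_of_lt_of_le ht₂0 hq.2.2.1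
    have hQsub' : Q ⊆ {q | 0 ≤ q.2.2} := fun q hq => ht₂0.le.trans hq.2.2.1
    have hcontH : ContinuousOn (fun q : ℝ × ℝ × ℝ =>
        exp (-K * q.2.2) * p q.1 q.2.1 q.2.2 - Ψ ε q.1 q.2.1 q.2.2) Q := by
      have c1 := (gker_continuousOn (ε ^ 2) a (by positivity)).mono hQsub'
      have c2 := (gker_continuousOn (ε ^ 2) b (by positivity)).mono hQsub'
      refine ContinuousOn.sub (ContinuousOn.mul (by fun_prop) (hcont.mono hQsub)) ?_
      simp only [hΨ]
      exact ((by fun_prop : ContinuousOn (fun q : ℝ × ℝ × ℝ =>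
        ε + ε * (q.1 ^ 2 + q.2.1 ^ 2 + 5 * q.2.2)) Q).add
          (continuousOn_const.mul c1)).add (continuousOn_const.mul c2)
    have hmem₁ : ((x₁, y₁, t₁) : ℝ × ℝ × ℝ) ∈ Q :=
      ⟨abs_le.1 hx₁.le, abs_le.1 hy₁.le, ht₂t₁.le, ht₁τ⟩
    obtain ⟨⟨x, y, t⟩, hq, hmax⟩ := hQc.exists_isMaxOn ⟨_, hmem₁⟩ hcontH
    have hmax' : ∀ x' y' t', x' ∈ Icc (-R) R → y' ∈ Icc (-R) R → t' ∈ Icc t₂ τ →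
        exp (-K * t') * p x' y' t' - Ψ ε x' y' t' ≤ exp (-K * t) * p x y t - Ψ ε x y t :=
      fun x' y' t' h1 h2 h3 => hmax (show (x', y', t') ∈ Q from ⟨h1, h2, h3⟩)
    have hpos : 0 < exp (-K * t) * p x y t - Ψ ε x y t :=
      (by linarith : 0 < exp (-K * t₁) * p x₁ y₁ t₁ - Ψ ε x₁ y₁ t₁).trans_le
        (hmax' x₁ y₁ t₁ hmem₁.1 hmem₁.2.1 hmem₁.2.2)
    obtain ⟨hxR, hyR, htt⟩ : x ∈ Icc (-R) R ∧ y ∈ Icc (-R) R ∧ t ∈ Icc t₂ τ := hq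
    have ht : 0 < t := ht₂0.trans_le htt.1
    have hx : |x| < R := by
      by_contra h; linarith [hfar x y t ht htt.2 (Or.inl (le_of_not_gt h))]
    have hy : |y| < R := by
      by_contra h; linarith [hfar x y t ht htt.2 (Or.inr (le_of_not_gt h))]
    have htt₂ : t₂ < t := by
      rcases htt.1.eq_or_lt with h | h
      · have := hearly x y t ht htt.2 (h ▸ ht₂t₀) (h ▸ ht₂ε) hx.le hy.le
        linarith
      · exact h
    have hppos : 0 < p x y t := by
      have h1 := (hΨlow x y t ht).1
      have h2 := Real.exp_pos (-K * t)
      by_contra h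
      have : exp (-K * t) * p x y t ≤ 0 := mul_nonpos_of_nonneg_of_nonpos h2.le (le_of_not_gt h)
      linarith
    obtain ⟨pt, pxx, pyy, d1, d2, d3, d4⟩ := hder x y t ht htt.2 hppos
    obtain ⟨da, da1, da2⟩ := gker_heat (s := ε ^ 2) (x - a) (by positivity : 0 < t + ε ^ 2)
    obtain ⟨db, db1, db2⟩ := gker_heat (s := ε ^ 2) (x - b) (by positivity : 0 < t + ε ^ 2)
    have sqD2 : ∀ c z₀ : ℝ, HasD2 (fun z => c * z ^ 2) (c * 2) z₀ := by
      intro c z₀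
      refine HasD2.const_mul c ⟨fun z => 2 * z, Eventually.of_forall fun z => ?_, ?_⟩
      · simpa using hasDerivAt_pow 2 z
      · simpa using (hasDerivAt_id z₀).const_mul 2
    have Dt : HasDerivAt (fun s => exp (-K * s) * p x y s - Ψ ε x y s)
        (exp (-K * t) * (pt - K * p x y t) - (5 * ε + M' * (4 * ε) * da + M' * (4 * ε) * db)) t := by
      have e1 : HasDerivAt (fun s => exp (-K * s)) (exp (-K * t) * (-K)) t := by
        simpa using ((hasDerivAt_id t).const_mul (-K)).exp
      have e2 : HasDerivAt (fun s : ℝ => ε + ε * (x ^ 2 + y ^ 2 + 5 * s)) (ε * 5) t := by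
        simpa using ((((hasDerivAt_id t).const_mul 5).const_add (x ^ 2 + y ^ 2)).const_mul
          ε).const_add ε
      refine ((e1.mul d1).sub ((e2.add (da1.const_mul (M' * (4 * ε)))).add
        (db1.const_mul (M' * (4 * ε))))).congr_deriv ?_
      ring
    have Dx : HasD2 (fun z => exp (-K * t) * p z y t - Ψ ε z y t)
        (exp (-K * t) * pxx - (ε * 2 + M' * (4 * ε) * da + M' * (4 * ε) * db)) x := by
      have e := (d2.const_mul (exp (-K * t))).sub
        ((((HasD2.const (ε + ε * (y ^ 2 + 5 * t)) x).add (sqD2 ε x)).add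
          (da2.comp_sub.const_mul (M' * (4 * ε)))).add (db2.comp_sub.const_mul (M' * (4 * ε))))
      have e' := e.congr (h := fun z => exp (-K * t) * p z y t - Ψ ε z y t)
        (Eventually.of_forall fun z => by simp only [hΨ]; ring)
      convert e' using 1
      ring
    have Dy : HasD2 (fun z => exp (-K * t) * p x z t - Ψ ε x z t)
        (exp (-K * t) * pyy - ε * 2) y := by
      have e := (d3.const_mul (exp (-K * t))).sub
        ((HasD2.const (ε + ε * (x ^ 2 + 5 * t) + M' * (4 * ε) * gker (ε ^ 2) (x - a) t +
          M' * (4 * ε) * gker (ε ^ 2) (x - b) t) y).add (sqD2 ε y))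
      have e' := e.congr (h := fun z => exp (-K * t) * p x z t - Ψ ε x z t)
        (Eventually.of_forall fun z => by simp only [hΨ]; ring)
      convert e' using 1
      ring
    have i1 := deriv_nonneg_of_left_max htt₂ Dt
      (fun r hr => hmax' x y r hxR hyR ⟨hr.1, hr.2.trans htt.2⟩)
    have i2 := Dx.nonpos_of_isLocalMax (by
      filter_upwards [Icc_mem_nhds (abs_lt.1 hx).1 (abs_lt.1 hx).2] with z hz
      exact hmax' z y t hz hyR htt)
    have i3 := Dy.nonpos_of_isLocalMax (by
      filter_upwards [Icc_mem_nhds (abs_lt.1 hy).1 (abs_lt.1 hy).2] with z hz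
      exact hmax' x z t hxR hz htt)
    have i4 : exp (-K * t) * (pt - (pxx + pyy + K * p x y t)) ≤ 0 :=
      mul_nonpos_of_nonneg_of_nonpos (Real.exp_pos _).le (by linarith)
    nlinarith
  intro x y t ht htτ
  by_contra hp
  push Not at hp
  -- Every term of `Ψ ε` is `O(ε)` at the fixed point `(x, y, t)`.
  have hg : ∀ ε c, 0 < ε → gker (ε ^ 2) c t ≤ (√t)⁻¹ := by
    intro ε c hε
    unfold gker
    have h1 : (√(t + ε ^ 2))⁻¹ ≤ (√t)⁻¹ := by
      gcongr
      nlinarith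
    have h2 : exp (-(c ^ 2) / (4 * (t + ε ^ 2))) ≤ 1 := by
      rw [Real.exp_le_one_iff]
      apply div_nonpos_of_nonpos_of_nonneg <;> nlinarith [sq_nonneg c, sq_nonneg ε]
    have h3 : 0 ≤ (√t)⁻¹ := by positivity
    calc _ ≤ (√t)⁻¹ * 1 := mul_le_mul h1 h2 (Real.exp_pos _).le h3
      _ = _ := mul_one _
  set C := 1 + (x ^ 2 + y ^ 2 + 5 * t) + M' * 4 * (√t)⁻¹ + M' * 4 * (√t)⁻¹ with hC
  have hC0 : 0 < C := by positivity
  have hP : 0 < exp (-K * t) * p x y t := mul_pos (Real.exp_pos _) hp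
  have hup : ∀ ε > 0, exp (-K * t) * p x y t ≤ ε * C := by
    intro ε hε
    refine (key ε hε x y t ht htτ).trans ?_
    have g1 := mul_le_mul_of_nonneg_left (hg ε (x - a) hε) (by positivity : 0 ≤ M' * (4 * ε))
    have g2 := mul_le_mul_of_nonneg_left (hg ε (x - b) hε) (by positivity : 0 ≤ M' * (4 * ε))
    simp only [hΨ, hC]
    linarith
  have := hup (exp (-K * t) * p x y t / (2 * C)) (by positivity)
  have e : exp (-K * t) * p x y t / (2 * C) * C = exp (-K * t) * p x y t / 2 := by
    field_simp
  linarith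

/-! ### Solutions of the reaction-diffusion equation -/

/-- `f(t,·)` is Lipschitz with constant `K` on `[-M, M]`, uniformly in `t`. -/
def UnifLip (f : ℝ → ℝ → ℝ) (K M : ℝ) : Prop :=
  ∀ t u v, |u| ≤ M → |v| ≤ M → |f t u - f t v| ≤ K * |u - v|

lemma exists_unifLip {f : ℝ → ℝ → ℝ} {T : ℝ} (hT : 0 < T)
    (hf : ContDiff ℝ 2 (Function.uncurry f)) (hfper : ∀ t u : ℝ, f (t + T) u = f t u) (M : ℝ) :
    ∃ K, 0 ≤ K ∧ UnifLip f K M := by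
  have hs : Convex ℝ (Icc 0 T ×ˢ Icc (-M) M) := (convex_Icc 0 T).prod (convex_Icc (-M) M)
  have hs' : IsCompact (Icc 0 T ×ˢ Icc (-M) M) := isCompact_Icc.prod isCompact_Icc
  obtain ⟨K, hK⟩ := hf.contDiffOn.exists_lipschitzOnWith (by norm_num) hs hs'
  refine ⟨K, K.2, fun t u v hu hv => ?_⟩
  have hper : ∀ w, Function.Periodic (fun t => f t w) T := fun w t => hfper t w
  obtain ⟨n, hn⟩ : ∃ n : ℤ, t - n * T ∈ Ico 0 T := by
    obtain ⟨n, hn, -⟩ := existsUnique_sub_zsmul_mem_Ico hT t 0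
    exact ⟨n, by simpa using hn⟩
  have e : ∀ w, f (t - n * T) w = f t w := fun w => (hper w).sub_int_mul_eq n
  have h := hK.dist_le_mul (t - n * T, u) ⟨⟨hn.1, hn.2.le⟩, abs_le.1 hu⟩
    (t - n * T, v) ⟨⟨hn.1, hn.2.le⟩, abs_le.1 hv⟩
  simpa [Prod.dist_eq, Real.dist_eq, Function.uncurry, e] using h

lemma UnifLip.shift {f : ℝ → ℝ → ℝ} {K M : ℝ} (h : UnifLip f K M) (s : ℝ) :
    UnifLip (fun t => f (t + s)) K M := fun t => h (t + s)

lemma IsSolOn.continuousOn {f u : ℝ → ℝ → ℝ} {I : Set ℝ} (hI : IsOpen I) (h : IsSolOn f u I) :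
    ContinuousOn (fun p : ℝ × ℝ => u p.1 p.2) (univ ×ˢ I) := by
  obtain ⟨ut, ux, uxx, h1, h2, -, c1, -, -, -⟩ := h
  rintro ⟨x₀, t₀⟩ ⟨-, ht₀⟩
  apply ContinuousAt.continuousWithinAt
  have hopen : IsOpen (univ ×ˢ I : Set (ℝ × ℝ)) := isOpen_univ.prod hI
  have hc : ContinuousAt (fun p : ℝ × ℝ => ut p.1 p.2) (x₀, t₀) :=
    c1.continuousAt (hopen.mem_nhds ⟨mem_univ _, ht₀⟩)
  have hev : ∀ᶠ p : ℝ × ℝ in 𝓝 (x₀, t₀), p ∈ (univ ×ˢ I : Set (ℝ × ℝ)) ∧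
      ‖ut p.1 p.2‖ < ‖ut x₀ t₀‖ + 1 :=
    (hopen.eventually_mem ⟨mem_univ _, ht₀⟩).and
      (hc.norm.eventually (gt_mem_nhds (by simp)))
  obtain ⟨ε, hε, hball⟩ := Metric.eventually_nhds_iff_ball.1 hev
  have hbound : ∀ᶠ p : ℝ × ℝ in 𝓝 (x₀, t₀),
      ‖u p.1 p.2 - u p.1 t₀‖ ≤ (‖ut x₀ t₀‖ + 1) * ‖p.2 - t₀‖ := by
    filter_upwards [Metric.ball_mem_nhds (x₀, t₀) hε] with p hp
    rw [Metric.mem_ball, Prod.dist_eq, max_lt_iff] at hp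
    have hin : ∀ s ∈ Metric.ball t₀ ε, ((p.1, s) : ℝ × ℝ) ∈ Metric.ball (x₀, t₀) ε := by
      intro s hs
      rw [Metric.mem_ball, Prod.dist_eq, max_lt_iff]
      exact ⟨hp.1, hs⟩
    exact (convex_ball t₀ ε).norm_image_sub_le_of_norm_hasDerivWithin_le
      (f := fun s => u p.1 s) (f' := fun s => ut p.1 s)
      (fun s hs => (h1 p.1 s (hball _ (hin s hs)).1.2).hasDerivWithinAt)
      (fun s hs => (hball _ (hin s hs)).2.le) (Metric.mem_ball_self hε) hp.2
  have l1 : Tendsto (fun p : ℝ × ℝ => u p.1 p.2 - u p.1 t₀) (𝓝 (x₀, t₀)) (𝓝 0) := by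
    refine squeeze_zero_norm' hbound ?_
    have : Continuous (fun p : ℝ × ℝ => (‖ut x₀ t₀‖ + 1) * ‖p.2 - t₀‖) := by fun_prop
    simpa using this.tendsto (x₀, t₀)
  have l2 : Tendsto (fun p : ℝ × ℝ => u p.1 t₀) (𝓝 (x₀, t₀)) (𝓝 (u x₀ t₀)) :=
    (h2 x₀ t₀ ht₀).continuousAt.tendsto.comp continuous_fst.continuousAt
  have := l1.add l2
  simpa [ContinuousAt] using this

lemma IsSolOn.mono {f u : ℝ → ℝ → ℝ} {I J : Set ℝ} (h : IsSolOn f u I) (hJ : J ⊆ I) :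
    IsSolOn f u J := by
  obtain ⟨ut, ux, uxx, h1, h2, h3, c1, c2, c3, e⟩ := h
  have hs : (univ ×ˢ J : Set (ℝ × ℝ)) ⊆ univ ×ˢ I := prod_mono_right hJ
  exact ⟨ut, ux, uxx, fun x t ht => h1 x t (hJ ht), fun x t ht => h2 x t (hJ ht),
    fun x t ht => h3 x t (hJ ht), c1.mono hs, c2.mono hs, c3.mono hs, fun x t ht => e x t (hJ ht)⟩

lemma IsSolOn.shift {f g u : ℝ → ℝ → ℝ} {I J : Set ℝ} (h : IsSolOn f u I) (a s : ℝ)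
    (hJ : ∀ t ∈ J, t + s ∈ I) (hg : ∀ t v, g t v = f (t + s) v) :
    IsSolOn g (fun x t => u (x + a) (t + s)) J := by
  obtain ⟨ut, ux, uxx, h1, h2, h3, c1, c2, c3, e⟩ := h
  have hm : MapsTo (fun p : ℝ × ℝ => (p.1 + a, p.2 + s)) (univ ×ˢ J) (univ ×ˢ I) :=
    fun p hp => ⟨mem_univ _, hJ _ hp.2⟩
  have hc : ContinuousOn (fun p : ℝ × ℝ => (p.1 + a, p.2 + s)) (univ ×ˢ J) := by fun_prop
  refine ⟨fun x t => ut (x + a) (t + s), fun x t => ux (x + a) (t + s),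
    fun x t => uxx (x + a) (t + s), fun x t ht => (h1 _ _ (hJ t ht)).comp_add_const t s,
    fun x t ht => (h2 _ _ (hJ t ht)).comp_add_const x a,
    fun x t ht => (h3 _ _ (hJ t ht)).comp_add_const x a,
    c1.comp hc hm, c2.comp hc hm, c3.comp hc hm, fun x t ht => ?_⟩
  rw [hg]
  exact e _ _ (hJ t ht)

lemma IsSolOn.reflect {f u : ℝ → ℝ → ℝ} {I : Set ℝ} (h : IsSolOn f u I) :
    IsSolOn f (fun x t => u (-x) t) I := by
  obtain ⟨ut, ux, uxx, h1, h2, h3, c1, c2, c3, e⟩ := h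
  have hm : MapsTo (fun p : ℝ × ℝ => (-p.1, p.2)) (univ ×ˢ I) (univ ×ˢ I) :=
    fun p hp => ⟨mem_univ _, hp.2⟩
  have hc : ContinuousOn (fun p : ℝ × ℝ => (-p.1, p.2)) (univ ×ˢ I) := by fun_prop
  refine ⟨fun x t => ut (-x) t, fun x t => -ux (-x) t,
    fun x t => uxx (-x) t, fun x t ht => h1 _ _ ht,
    fun x t ht => ?_, fun x t ht => ?_,
    c1.comp hc hm, (c2.comp hc hm).neg, c3.comp hc hm, fun x t ht => e _ _ ht⟩
  · exact ((h2 (-x) t ht).comp x (hasDerivAt_neg x)).congr_deriv (by simp)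
  · exact ((h3 (-x) t ht).comp x (hasDerivAt_neg x)).neg.congr_deriv (by simp)

lemma isSolOn_ode {f : ℝ → ℝ → ℝ} (hf : Continuous (Function.uncurry f)) {g : ℝ → ℝ}
    (hg : ∀ t, HasDerivAt g (f t (g t)) t) (I : Set ℝ) : IsSolOn f (fun _ t => g t) I := by
  have hgc : Continuous g := continuous_iff_continuousAt.2 fun t => (hg t).continuousAt
  have hc : Continuous (fun t => f t (g t)) := hf.comp (continuous_id.prodMk hgc)
  refine ⟨fun _ t => f t (g t), fun _ _ => 0, fun _ _ => 0, fun x t _ => hg t,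
    fun x t _ => hasDerivAt_const x _, fun x t _ => hasDerivAt_const x _,
    (hc.comp continuous_snd).continuousOn, continuousOn_const, continuousOn_const,
    fun x t _ => by simp⟩

lemma IsSolOn.sub_derivs {f u v : ℝ → ℝ → ℝ} {I : Set ℝ} (hu : IsSolOn f u I)
    (hv : IsSolOn f v I) (x : ℝ) {t : ℝ} (ht : t ∈ I) :
    ∃ wt wxx, HasDerivAt (fun s => u x s - v x s) wt t ∧
      HasD2 (fun z => u z t - v z t) wxx x ∧ wt = wxx + (f t (u x t) - f t (v x t)) := by
  obtain ⟨ut, ux, uxx, h1, h2, h3, -, -, -, e⟩ := hu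
  obtain ⟨vt, vx, vxx, k1, k2, k3, -, -, -, e'⟩ := hv
  refine ⟨ut x t - vt x t, uxx x t - vxx x t, (h1 x t ht).sub (k1 x t ht),
    HasD2.sub ⟨fun z => ux z t, Eventually.of_forall fun z => h2 z t ht, h3 x t ht⟩
      ⟨fun z => vx z t, Eventually.of_forall fun z => k2 z t ht, k3 x t ht⟩, ?_⟩
  rw [e x t ht, e' x t ht]; ring

lemma UnifLip.le {f : ℝ → ℝ → ℝ} {K M : ℝ} (h : UnifLip f K M) (t : ℝ) {u v : ℝ}
    (hu : |u| ≤ M) (hv : |v| ≤ M) (huv : v < u) : f t u - f t v ≤ K * (u - v) := by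
  have := h t u v hu hv
  rw [abs_of_pos (sub_pos.2 huv)] at this
  exact (le_abs_self _).trans this

lemma IsSolOn.continuousOn_pull {f u : ℝ → ℝ → ℝ} (h : IsSolOn f u (Ioi 0)) {φ : ℝ × ℝ × ℝ → ℝ}
    (hφ : Continuous φ) :
    ContinuousOn (fun q : ℝ × ℝ × ℝ => u (φ q) q.2.2) {q | 0 < q.2.2} :=
  (h.continuousOn isOpen_Ioi).comp (f := fun q : ℝ × ℝ × ℝ => (φ q, q.2.2))
    (by fun_prop) fun q hq => ⟨mem_univ _, hq⟩

/-- Quantitative comparison. If `u₁ - u₂ ≤ ε + A eˣ` initially, off two points, then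
`u₁ - u₂ ≤ ε e^{Kt} + A e^{x+(1+K)t}`: the right-hand side solves `E_t = E_xx + K E`. -/
lemma comparison {f u₁ u₂ : ℝ → ℝ → ℝ} {K M τ ε A a b : ℝ} (hK : 0 ≤ K) (hε : 0 ≤ ε) (hA : 0 ≤ A)
    (hL : UnifLip f K M) (h₁ : IsSolOn f u₁ (Ioi 0)) (h₂ : IsSolOn f u₂ (Ioi 0))
    (b₁ : ∀ x t, 0 < t → t ≤ τ → |u₁ x t| ≤ M) (b₂ : ∀ x t, 0 < t → t ≤ τ → |u₂ x t| ≤ M)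
    (hinit : ∀ R > 0, ∀ η > 0, ∀ δ > 0, ∃ t₀ > 0, ∀ t, 0 < t → t < t₀ → ∀ x, |x| ≤ R →
      δ ≤ |x - a| → δ ≤ |x - b| → u₁ x t - u₂ x t ≤ ε + A * exp x + η) :
    ∀ x t, 0 < t → t ≤ τ →
      u₁ x t - u₂ x t ≤ ε * exp (K * t) + A * exp (x + (1 + K) * t) := by
  have main := max_principle (τ := τ) (K := K) (M := 2 * M) (a := a) (b := b)
    (p := fun x _ t => u₁ x t - u₂ x t - (ε * exp (K * t) + A * exp (x + (1 + K) * t))) hK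
    ?_ ?_ ?_ ?_
  · intro x t ht htτ
    have := main x 0 t ht htτ
    linarith
  · exact ((h₁.continuousOn_pull continuous_fst).sub (h₂.continuousOn_pull continuous_fst)).sub
      (by fun_prop)
  · intro x y t ht htτ
    have i1 := abs_le.1 (b₁ x t ht htτ)
    have i2 := abs_le.1 (b₂ x t ht htτ)
    have : 0 ≤ ε * exp (K * t) + A * exp (x + (1 + K) * t) := by positivity
    linarith
  · intro x y t ht htτ hp
    have hE : 0 ≤ ε * exp (K * t) + A * exp (x + (1 + K) * t) := by positivity
    obtain ⟨wt, wxx, d1, d2, d3⟩ := h₁.sub_derivs h₂ x (mem_Ioi.2 ht)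
    have hlt : u₂ x t < u₁ x t := by linarith
    have hl := hL.le t (b₁ x t ht htτ) (b₂ x t ht htτ) hlt
    have e1 : HasDerivAt (fun s => ε * exp (K * s) + A * exp (x + (1 + K) * s))
        (ε * (exp (K * t) * K) + A * (exp (x + (1 + K) * t) * (1 + K))) t := by
      have j1 : HasDerivAt (fun s : ℝ => K * s) K t := by
        simpa using (hasDerivAt_id t).const_mul K
      have j2 : HasDerivAt (fun s : ℝ => x + (1 + K) * s) (1 + K) t := by
        simpa using ((hasDerivAt_id t).const_mul (1 + K)).const_add x
      exact (j1.exp.const_mul ε).add (j2.exp.const_mul A)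
    have e2 : HasD2 (fun z => ε * exp (K * t) + A * exp (z + (1 + K) * t))
        (A * exp (x + (1 + K) * t)) x := by
      have j : ∀ z, HasDerivAt (fun z => exp (z + (1 + K) * t)) (exp (z + (1 + K) * t)) z := by
        intro z
        simpa using ((hasDerivAt_id z).add_const ((1 + K) * t)).exp
      have := (HasD2.const (ε * exp (K * t)) x).add
        (HasD2.const_mul A ⟨fun z => exp (z + (1 + K) * t), Eventually.of_forall j, j x⟩)
      simpa using this
    refine ⟨_, _, 0, d1.sub e1, d2.sub e2, HasD2.const _ y, ?_⟩
    rw [d3]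
    nlinarith
  · intro R hR η hη δ hδ
    obtain ⟨t₀, ht₀, h⟩ := hinit R hR η hη δ hδ
    refine ⟨t₀, ht₀, fun t ht htt x y hx _ hxa hxb => ?_⟩
    have i := h t ht htt x hx hxa hxb
    have i1 : 1 ≤ exp (K * t) := Real.one_le_exp (by positivity)
    have i2 : exp x ≤ exp (x + (1 + K) * t) := by
      apply Real.exp_le_exp.2
      have : 0 ≤ (1 + K) * t := by positivity
      linarith
    have i3 := mul_le_mul_of_nonneg_left i1 hε
    have i4 := mul_le_mul_of_nonneg_left i2 hA
    linarith

/-- A function continuous up to `t = 0` and nonpositive there is small for small times, uniformly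
on compacts. -/
lemma small_of_init_nonpos {F : ℝ × ℝ → ℝ} (hF : ContinuousOn F (univ ×ˢ Ici 0))
    (h0 : ∀ x, F (x, 0) ≤ 0) (R : ℝ) {η : ℝ} (hη : 0 < η) :
    ∃ t₀ > 0, ∀ t, 0 < t → t < t₀ → ∀ x, |x| ≤ R → F (x, t) ≤ η := by
  have hc : IsCompact (Icc (-R) R ×ˢ Icc (0 : ℝ) 1) := isCompact_Icc.prod isCompact_Icc
  have hu := hc.uniformContinuousOn_of_continuous
    (hF.mono (prod_mono (subset_univ _) Icc_subset_Ici_self))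
  obtain ⟨δ, hδ, h⟩ := Metric.uniformContinuousOn_iff.1 hu η hη
  refine ⟨min δ 1, by positivity, fun t ht htt x hx => ?_⟩
  have h1 := h (x, t) ⟨abs_le.1 hx, ht.le, htt.le.trans (min_le_right _ _)⟩ (x, 0)
    ⟨abs_le.1 hx, le_rfl, zero_le_one⟩ (by
      rw [Prod.dist_eq]
      simpa [abs_of_pos ht, hδ] using htt.trans_le (min_le_left _ _))
  rw [Real.dist_eq] at h1
  linarith [(abs_lt.1 h1).2, h0 x]

lemma comparison_entire {f u₁ u₂ : ℝ → ℝ → ℝ} {K M τ ε A : ℝ} (hK : 0 ≤ K) (hε : 0 ≤ ε)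
    (hA : 0 ≤ A) (hL : UnifLip f K M) (h₁ : IsSolOn f u₁ univ) (h₂ : IsSolOn f u₂ univ)
    (b₁ : ∀ x t, 0 < t → t ≤ τ → |u₁ x t| ≤ M) (b₂ : ∀ x t, 0 < t → t ≤ τ → |u₂ x t| ≤ M)
    (hinit : ∀ x, u₁ x 0 - u₂ x 0 ≤ ε + A * exp x) :
    ∀ x t, 0 < t → t ≤ τ →
      u₁ x t - u₂ x t ≤ ε * exp (K * t) + A * exp (x + (1 + K) * t) := by
  refine comparison (a := 0) (b := 0) hK hε hA hL (h₁.mono (subset_univ _))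
    (h₂.mono (subset_univ _)) b₁ b₂ ?_
  intro R hR η hη δ hδ
  have c₁ := (h₁.continuousOn isOpen_univ).mono
    (prod_mono_right (subset_univ (Ici (0 : ℝ))) : (univ : Set ℝ) ×ˢ Ici (0 : ℝ) ⊆ univ ×ˢ univ)
  have c₂ := (h₂.continuousOn isOpen_univ).mono
    (prod_mono_right (subset_univ (Ici (0 : ℝ))) : (univ : Set ℝ) ×ˢ Ici (0 : ℝ) ⊆ univ ×ˢ univ)
  obtain ⟨t₀, ht₀, h⟩ := small_of_init_nonpos
    (F := fun q => u₁ q.1 q.2 - u₂ q.1 q.2 - (ε + A * exp q.1))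
    ((c₁.sub c₂).sub (by fun_prop)) (fun x => by linarith [hinit x]) R hη
  refine ⟨t₀, ht₀, fun t ht htt x hx _ _ => ?_⟩
  have := h t ht htt x hx
  simp only at this
  linarith

/-- Order is preserved forward in time. -/
lemma order_forward {f u₁ u₂ : ℝ → ℝ → ℝ} {K M : ℝ} (hK : 0 ≤ K)
    (hL : UnifLip f K M) (h₁ : IsSolOn f u₁ univ) (h₂ : IsSolOn f u₂ univ)
    (b₁ : ∀ x t, |u₁ x t| ≤ M) (b₂ : ∀ x t, |u₂ x t| ≤ M) {s : ℝ}
    (hinit : ∀ x, u₁ x s ≤ u₂ x s) : ∀ x t, s ≤ t → u₁ x t ≤ u₂ x t := by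
  intro x t ht
  rcases ht.eq_or_lt with rfl | ht
  · exact hinit x
  have := comparison_entire (τ := t - s) (ε := 0) (A := 0) hK le_rfl le_rfl (hL.shift s)
    (h₁.shift 0 s (J := univ) (fun _ _ => mem_univ _) fun _ _ => rfl)
    (h₂.shift 0 s (J := univ) (fun _ _ => mem_univ _) fun _ _ => rfl)
    (fun x t _ _ => b₁ _ _) (fun x t _ _ => b₂ _ _)
    (fun x => by simpa using hinit x) x (t - s) (by linarith) le_rfl
  simpa using this

/-- The core of the strong maximum principle: the subsolution `η e^{-Kt}(gker - c₀)` is negative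
outside a small ball at time `0` and positive at the target point. -/
lemma strong_max_zero {f u v : ℝ → ℝ → ℝ} {K M : ℝ} (hK : 0 ≤ K) (hL : UnifLip f K M)
    (hu : IsSolOn f u univ) (hv : IsSolOn f v univ)
    (bu : ∀ x t, |u x t| ≤ M) (bv : ∀ x t, |v x t| ≤ M) (hvu : ∀ x t, v x t ≤ u x t)
    {x₀ : ℝ} (h₀ : v x₀ 0 < u x₀ 0) (x₁ t₁ : ℝ) (ht₁ : 0 < t₁) : v x₁ t₁ < u x₁ t₁ := by
  have cu : Continuous (fun q : ℝ × ℝ => u q.1 q.2) := by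
    simpa [continuousOn_univ] using hu.continuousOn isOpen_univ
  have cv : Continuous (fun q : ℝ × ℝ => v q.1 q.2) := by
    simpa [continuousOn_univ] using hv.continuousOn isOpen_univ
  -- a ball around `x₀` on which `u - v ≥ m` at time `0`
  obtain ⟨r, hr, m, hm, hrm⟩ : ∃ r > 0, ∃ m > 0, ∀ x, |x - x₀| < r → m ≤ u x 0 - v x 0 := by
    have c0 : Continuous (fun x : ℝ => u x 0 - v x 0) :=
      (cu.comp (by fun_prop : Continuous fun x : ℝ => (x, (0 : ℝ)))).sub
        (cv.comp (by fun_prop : Continuous fun x : ℝ => (x, (0 : ℝ))))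
    have hpos : 0 < (u x₀ 0 - v x₀ 0) / 2 := by linarith
    have : ∀ᶠ x in 𝓝 x₀, (u x₀ 0 - v x₀ 0) / 2 < u x 0 - v x 0 :=
      c0.continuousAt.eventually (lt_mem_nhds (by linarith))
    obtain ⟨r, hr, h⟩ := Metric.eventually_nhds_iff.1 this
    exact ⟨r, hr, _, hpos, fun x hx => (h (by rwa [Real.dist_eq])).le⟩
  set ρ := (√(2 * t₁))⁻¹ * exp (-((x₁ - x₀) ^ 2) / (4 * t₁)) with hρ
  have hρ0 : 0 < ρ := by positivity
  set s := min t₁ ((r ^ 2 * ρ / 8) ^ 2) with hs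
  have hs0 : 0 < s := by positivity
  have hst : s ≤ t₁ := min_le_left _ _
  have hssq : √s ≤ r ^ 2 * ρ / 8 := by
    rw [Real.sqrt_le_left (by positivity)]; exact min_le_right _ _
  have hsq0 : 0 < √s := by positivity
  have hssq2 : √s * √s = s := Real.mul_self_sqrt hs0.le
  set c₀ := (√s)⁻¹ * exp (-(r ^ 2) / (4 * s)) with hc₀
  have hc₀0 : 0 < c₀ := by positivity
  have hc₀ρ : c₀ < ρ := by
    have h1 : exp (-(r ^ 2) / (4 * s)) ≤ 4 * s / r ^ 2 := by
      rw [neg_div, Real.exp_neg]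
      have h2 : r ^ 2 / (4 * s) ≤ exp (r ^ 2 / (4 * s)) := by
        linarith [Real.add_one_le_exp (r ^ 2 / (4 * s))]
      calc _ ≤ (r ^ 2 / (4 * s))⁻¹ := inv_anti₀ (by positivity) h2
        _ = _ := by rw [inv_div]
    have h3 : c₀ ≤ (√s)⁻¹ * (4 * s / r ^ 2) := by rw [hc₀]; gcongr
    have h4 : (√s)⁻¹ * (4 * s / r ^ 2) = 4 * √s / r ^ 2 := by
      rw [← hssq2]
      rw [Real.sqrt_mul_self hsq0.le]
      field_simp
    have h5 : 4 * √s / r ^ 2 ≤ ρ / 2 := by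
      rw [div_le_iff₀ (by positivity)]; linarith
    linarith
  have hgρ : ρ ≤ gker s (x₁ - x₀) t₁ := by
    unfold gker
    rw [hρ]
    have h1 : (√(2 * t₁))⁻¹ ≤ (√(t₁ + s))⁻¹ := by gcongr; linarith
    have h2 : -((x₁ - x₀) ^ 2) / (4 * t₁) ≤ -((x₁ - x₀) ^ 2) / (4 * (t₁ + s)) := by
      rw [neg_div, neg_div, neg_le_neg_iff]; gcongr; linarith
    gcongr
  have hgle : ∀ x t, 0 ≤ t → gker s x t ≤ (√s)⁻¹ := by
    intro x t ht
    unfold gker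
    have h1 : (√(t + s))⁻¹ ≤ (√s)⁻¹ := by gcongr; linarith
    have h2 : exp (-(x ^ 2) / (4 * (t + s))) ≤ 1 := by
      rw [Real.exp_le_one_iff]
      apply div_nonpos_of_nonpos_of_nonneg <;> nlinarith [sq_nonneg x]
    calc _ ≤ (√s)⁻¹ * 1 := mul_le_mul h1 h2 (Real.exp_pos _).le (by positivity)
      _ = _ := mul_one _
  set η := m * √s with hη
  have hη0 : 0 < η := by positivity
  have hηm : η * (√s)⁻¹ = m := by rw [hη]; field_simp
  have hEle : ∀ t, 0 ≤ t → exp (-K * t) ≤ 1 := fun t ht => by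
    rw [Real.exp_le_one_iff]; nlinarith [mul_nonneg hK ht]
  have hφle : ∀ x t, 0 ≤ t → η * exp (-K * t) * (gker s (x - x₀) t - c₀) ≤ m := by
    intro x t ht
    have h1 := hgle (x - x₀) t ht
    have h2 : gker s (x - x₀) t - c₀ ≤ (√s)⁻¹ := by linarith
    have h3 : η * exp (-K * t) ≤ η := by nlinarith [hEle t ht]
    calc _ ≤ η * exp (-K * t) * (√s)⁻¹ := by gcongr
      _ ≤ η * (√s)⁻¹ := by gcongr
      _ = m := hηm
  have main := max_principle (τ := t₁) (K := K) (M := m) (a := 0) (b := 0)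
    (p := fun x _ t => η * exp (-K * t) * (gker s (x - x₀) t - c₀) - (u x t - v x t)) hK
    ?_ ?_ ?_ ?_ x₁ 0 t₁ ht₁ le_rfl
  · have h1 : 0 < η * exp (-K * t₁) * (gker s (x₁ - x₀) t₁ - c₀) :=
      mul_pos (by positivity) (by linarith)
    linarith
  · have hg := (gker_continuousOn s x₀ hs0).mono
      (fun q hq => le_of_lt (show 0 < q.2.2 from hq) :
        {q : ℝ × ℝ × ℝ | 0 < q.2.2} ⊆ {q | 0 ≤ q.2.2})
    exact ContinuousOn.sub (ContinuousOn.mul (by fun_prop) (hg.sub continuousOn_const))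
      (((hu.mono (subset_univ _)).continuousOn_pull continuous_fst).sub
        ((hv.mono (subset_univ _)).continuousOn_pull continuous_fst))
  · intro x y t ht _
    linarith [hφle x t ht.le, hvu x t]
  · intro x y t ht _ hp
    obtain ⟨wt, wxx, d1, d2, d3⟩ := hu.sub_derivs hv x (mem_univ t)
    obtain ⟨g, g1, g2⟩ := gker_heat (s := s) (x - x₀) (by positivity : 0 < t + s)
    have e1 : HasDerivAt (fun r => η * exp (-K * r)) (η * (exp (-K * t) * (-K))) t := by
      have : HasDerivAt (fun r : ℝ => -K * r) (-K) t := by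
        simpa using (hasDerivAt_id t).const_mul (-K)
      exact this.exp.const_mul η
    have e2 := (g2.comp_sub.sub (HasD2.const c₀ x)).const_mul (η * exp (-K * t))
    refine ⟨_, _, 0, (e1.mul (g1.sub_const c₀)).sub d1, e2.sub d2, HasD2.const _ y, ?_⟩
    have hl := (abs_le.1 (hL t (u x t) (v x t) (bu x t) (bv x t))).1
    rw [abs_of_nonneg (sub_nonneg.2 (hvu x t))] at hl
    have hKp := mul_nonneg hK hp.le
    rw [d3]
    nlinarith
  · intro R hR ζ hζ δ hδ
    have hg : ContinuousOn (fun q : ℝ × ℝ => gker s (q.1 - x₀) q.2) (univ ×ˢ Ici 0) :=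
      (gker_continuousOn s x₀ hs0).comp (f := fun q : ℝ × ℝ => ((q.1, 0, q.2) : ℝ × ℝ × ℝ))
        (by fun_prop) fun q hq => hq.2
    have hF0 : ∀ x, η * exp (-K * 0) * (gker s (x - x₀) 0 - c₀) - (u x 0 - v x 0) ≤ 0 := by
      intro x
      by_cases hx : |x - x₀| < r
      · linarith [hφle x 0 le_rfl, hrm x hx]
      · have h1 : gker s (x - x₀) 0 ≤ c₀ := by
          unfold gker
          rw [hc₀, zero_add]
          have h2 : r ^ 2 ≤ (x - x₀) ^ 2 := by
            rw [← sq_abs (x - x₀)]; gcongr; exact le_of_not_gt hx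
          have h3 : -((x - x₀) ^ 2) / (4 * s) ≤ -(r ^ 2) / (4 * s) := by gcongr
          gcongr
        have h4 : η * exp (-K * 0) * (gker s (x - x₀) 0 - c₀) ≤ 0 :=
          mul_nonpos_of_nonneg_of_nonpos (by positivity) (by linarith)
        linarith [hvu x 0]
    obtain ⟨t₀, ht₀, h⟩ := small_of_init_nonpos
      (F := fun q => η * exp (-K * q.2) * (gker s (q.1 - x₀) q.2 - c₀) - (u q.1 q.2 - v q.1 q.2))
      (ContinuousOn.sub (ContinuousOn.mul (by fun_prop) (hg.sub continuousOn_const))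
        (cu.sub cv).continuousOn) hF0 R hζ
    exact ⟨t₀, ht₀, fun t ht htt x y hx _ _ _ => h t ht htt x hx⟩

lemma strong_max {f u v : ℝ → ℝ → ℝ} {K M : ℝ} (hK : 0 ≤ K) (hL : UnifLip f K M)
    (hu : IsSolOn f u univ) (hv : IsSolOn f v univ)
    (bu : ∀ x t, |u x t| ≤ M) (bv : ∀ x t, |v x t| ≤ M) (hvu : ∀ x t, v x t ≤ u x t)
    {x₀ t₀ : ℝ} (h₀ : v x₀ t₀ < u x₀ t₀) (x t : ℝ) (ht : t₀ < t) : v x t < u x t := by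
  have := strong_max_zero hK (hL.shift t₀)
    (hu.shift 0 t₀ (J := univ) (fun _ _ => mem_univ _) fun _ _ => rfl)
    (hv.shift 0 t₀ (J := univ) (fun _ _ => mem_univ _) fun _ _ => rfl)
    (fun _ _ => bu _ _) (fun _ _ => bv _ _) (fun _ _ => hvu _ _) (x₀ := x₀)
    (by simpa using h₀) x (t - t₀) (by linarith)
  simpa using this

/-! ### The solution with Heaviside initial datum -/

lemma IsHeavisideSol.init {f u : ℝ → ℝ → ℝ} {α : ℝ} {ωα : ℝ → ℝ}
    (h : IsHeavisideSol f α 0 ωα u) (R : ℝ) {η δ : ℝ} (hη : 0 < η) (hδ : 0 < δ) :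
    ∃ t₀ > 0, ∀ t, 0 < t → t < t₀ → ∀ x, |x| ≤ R → δ ≤ |x| →
      |u x t - (if x ≤ 0 then α else 0)| < η := by
  have hc : IsCompact (Icc (-R) R ∩ {x : ℝ | δ ≤ |x|}) :=
    isCompact_Icc.inter_right (isClosed_le continuous_const continuous_abs)
  obtain ⟨t₀, ht₀, hh⟩ := h.2.2 _ hc (by simp [hδ]) η hη
  refine ⟨t₀, ht₀, fun t ht htt x hx hxδ => ?_⟩
  have := hh t ⟨ht, htt⟩ x ⟨abs_le.1 hx, hxδ⟩
  simpa using this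

lemma small_time_close {g : ℝ → ℝ} (hg : Continuous g) {η : ℝ} (hη : 0 < η) :
    ∃ t₀ > 0, ∀ t, 0 < t → t < t₀ → |g t - g 0| < η := by
  obtain ⟨δ, hδ, h⟩ := Metric.continuous_iff.1 hg 0 η hη
  exact ⟨δ, hδ, fun t ht htt => h t (by simpa [abs_of_pos ht] using htt)⟩

/-- The sign of `u₀ - W` changes at most once, from `+` to `-`. The product
`(W - u₀)⁺(x) (u₀ - W)⁺(y)` is a subsolution on `{x < y}` which vanishes initially and on the
diagonal; replacing `y` by `max x y` extends it continuously by `0` to the plane. -/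
lemma sign_pattern {f u W : ℝ → ℝ → ℝ} {α K M : ℝ} {ωα : ℝ → ℝ} (hK : 0 ≤ K) (hL : UnifLip f K M)
    (hu : IsHeavisideSol f α 0 ωα u) (hω : Continuous ωα) (hω0 : ωα 0 = α)
    (hωM : ∀ t, ωα t ≤ M) (hW : IsSolOn f W (Ioi 0))
    (bW : ∀ x t, 0 < t → 0 ≤ W x t ∧ W x t ≤ ωα t) {x y t : ℝ} (ht : 0 < t) (hxy : x < y)
    (h1 : u x t < W x t) : u y t ≤ W y t := by
  have bu := hu.2.1
  have absu : ∀ x t, 0 < t → |u x t| ≤ M := fun x t ht => by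
    rw [abs_of_nonneg (bu x t ht).1]; exact (bu x t ht).2.trans (hωM t)
  have absW : ∀ x t, 0 < t → |W x t| ≤ M := fun x t ht => by
    rw [abs_of_nonneg (bW x t ht).1]; exact (bW x t ht).2.trans (hωM t)
  have hM : 0 ≤ M := (abs_nonneg _).trans (absu x t ht)
  have pmle : ∀ x t, 0 < t → max (W x t - u x t) 0 ≤ M := fun x t ht =>
    max_le (by linarith [(bW x t ht).2, hωM t, (bu x t ht).1]) hM
  have pple : ∀ x t, 0 < t → max (u x t - W x t) 0 ≤ M := fun x t ht =>
    max_le (by linarith [(bu x t ht).2, hωM t, (bW x t ht).1]) hM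
  have main := max_principle (τ := t) (K := 2 * K) (M := M * M) (a := 0) (b := 0)
    (p := fun x y t => max (W x t - u x t) 0 * max (u (max x y) t - W (max x y) t) 0)
    (by positivity) ?_ ?_ ?_ ?_ x y t ht le_rfl
  · by_contra hc
    push Not at hc
    have : 0 < max (W x t - u x t) 0 * max (u (max x y) t - W (max x y) t) 0 := by
      rw [max_eq_right hxy.le]
      exact mul_pos (lt_max_of_lt_left (by linarith)) (lt_max_of_lt_left (by linarith))
    linarith
  · have cm : Continuous fun q : ℝ × ℝ × ℝ => max q.1 q.2.1 := by fun_prop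
    exact (((hW.continuousOn_pull continuous_fst).sub
      (hu.1.continuousOn_pull continuous_fst)).sup continuousOn_const).mul
      (((hu.1.continuousOn_pull cm).sub (hW.continuousOn_pull cm)).sup continuousOn_const)
  · intro x y t ht _
    exact mul_le_mul (pmle _ _ ht) (pple _ _ ht) (le_max_right _ _) hM
  · intro x y t ht _ hp
    have hne : ∀ z : ℝ, 0 ≤ max z 0 := fun z => le_max_right _ _
    have hp1 : 0 < max (W x t - u x t) 0 := by
      rcases (hne (W x t - u x t)).eq_or_lt with h | h
      · simp [← h] at hp
      · exact h
    have hp2 : 0 < max (u (max x y) t - W (max x y) t) 0 := by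
      rcases (hne (u (max x y) t - W (max x y) t)).eq_or_lt with h | h
      · simp [← h] at hp
      · exact h
    have hd : 0 < W x t - u x t := by simpa using hp1
    have he' : 0 < u (max x y) t - W (max x y) t := by simpa using hp2
    have hxy : x < y := by
      by_contra h
      rw [max_eq_left (le_of_not_gt h)] at he'
      linarith
    have he : 0 < u y t - W y t := by rwa [max_eq_right hxy.le] at he'
    obtain ⟨dt, dxx, d1, d2, d3⟩ := hW.sub_derivs hu.1 x (mem_Ioi.2 ht)
    obtain ⟨et, exx, e1, e2, e3⟩ := hu.1.sub_derivs hW y (mem_Ioi.2 ht)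
    have ld := hL.le t (absW x t ht) (absu x t ht) (by linarith)
    have le := hL.le t (absu y t ht) (absW y t ht) (by linarith)
    have cd2 : ContinuousAt (fun z => W z t - u z t) x := by
      obtain ⟨g, hg, -⟩ := d2; exact hg.self_of_nhds.continuousAt
    have ce2 : ContinuousAt (fun z => u z t - W z t) y := by
      obtain ⟨g, hg, -⟩ := e2; exact hg.self_of_nhds.continuousAt
    refine ⟨dt * (u y t - W y t) + (W x t - u x t) * et, (u y t - W y t) * dxx,
      (W x t - u x t) * exx, ?_, ?_, ?_, ?_⟩
    · refine (d1.mul e1).congr_of_eventuallyEq ?_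
      filter_upwards [d1.continuousAt.eventually (lt_mem_nhds hd),
        e1.continuousAt.eventually (lt_mem_nhds he)] with r h1 h2
      simp only [Pi.mul_apply]
      rw [max_eq_right hxy.le, max_eq_left h1.le, max_eq_left h2.le]
    · refine (d2.const_mul (u y t - W y t)).congr ?_
      filter_upwards [cd2.eventually (lt_mem_nhds hd), gt_mem_nhds hxy] with z h1 h2
      rw [max_eq_right h2.le, max_eq_left h1.le, max_eq_left he.le, mul_comm]
    · refine (e2.const_mul (W x t - u x t)).congr ?_
      filter_upwards [ce2.eventually (lt_mem_nhds he), lt_mem_nhds hxy] with z h1 h2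
      rw [max_eq_right h2.le, max_eq_left h1.le, max_eq_left hd.le]
    · rw [max_eq_right hxy.le, max_eq_left hd.le, max_eq_left he.le, d3, e3]
      have i1 := mul_le_mul_of_nonneg_left ld he.le
      have i2 := mul_le_mul_of_nonneg_left le hd.le
      nlinarith
  · intro R hR η hη δ hδ
    set ζ := η / (2 * (M + 1)) with hζ
    have hζ0 : 0 < ζ := by positivity
    have hζM : 2 * ζ * M ≤ η := by
      have : 2 * ζ * (M + 1) = η := by rw [hζ]; field_simp
      nlinarith
    obtain ⟨t₁, ht₁, h1⟩ := hu.init R hζ0 hδ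
    obtain ⟨t₂, ht₂, h2⟩ := small_time_close hω hζ0
    refine ⟨min t₁ t₂, by positivity, fun t ht htt x y hx hy hxδ _ => ?_⟩
    rw [sub_zero] at hxδ
    have h1' := h1 t ht (htt.trans_le (min_le_left _ _))
    have h2' := h2 t ht (htt.trans_le (min_le_right _ _))
    rw [hω0] at h2'
    rcases le_or_gt x 0 with hx0 | hx0
    · have h3 := h1' x hx hxδ
      rw [if_pos hx0] at h3
      have h4 : max (W x t - u x t) 0 ≤ 2 * ζ :=
        max_le (by linarith [(abs_lt.1 h3).1, (abs_lt.1 h2').2, (bW x t ht).2]) (by positivity)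
      exact (mul_le_mul h4 (pple _ _ ht) (le_max_right _ _) (by positivity)).trans hζM
    · have hxm : 0 < max x y := lt_max_of_lt_left hx0
      have h3 := h1' (max x y) (by rw [abs_of_pos hxm]; exact max_le (abs_le.1 hx).2 (abs_le.1 hy).2)
        (by rw [abs_of_pos hxm]; rw [abs_of_pos hx0] at hxδ; exact hxδ.trans (le_max_left _ _))
      rw [if_neg (not_le.2 hxm)] at h3
      have h4 : max (u (max x y) t - W (max x y) t) 0 ≤ 2 * ζ :=
        max_le (by linarith [(abs_lt.1 h3).2, (bW (max x y) t ht).1]) (by positivity)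
      refine (mul_le_mul (pmle _ _ ht) h4 (le_max_right _ _) hM).trans ?_
      linarith

lemma heaviside_antitone {f u : ℝ → ℝ → ℝ} {α K M : ℝ} {ωα : ℝ → ℝ} (hK : 0 ≤ K) (hα : 0 ≤ α)
    (hL : UnifLip f K M) (hu : IsHeavisideSol f α 0 ωα u) (hωM : ∀ t, ωα t ≤ M)
    {t : ℝ} (ht : 0 < t) : Antitone (fun x => u x t) := by
  have absu : ∀ x t, 0 < t → |u x t| ≤ M := fun x t ht => by
    rw [abs_of_nonneg (hu.2.1 x t ht).1]; exact (hu.2.1 x t ht).2.trans (hωM t)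
  intro x y hxy
  rcases hxy.eq_or_lt with rfl | hxy
  · exact le_rfl
  set h := y - x with hh
  have hsol : IsSolOn f (fun x t => u (x + h) (t + 0)) (Ioi 0) :=
    hu.1.shift h 0 (fun t ht => by simpa using ht) (fun t v => by simp)
  have := comparison (τ := t) (ε := 0) (A := 0) (a := 0) (b := -h) hK le_rfl le_rfl hL hsol hu.1
    (fun x t ht _ => absu _ _ (by simpa using ht)) (fun x t ht _ => absu _ _ ht) ?_ x t ht le_rfl
  · simp only [add_zero, zero_mul] at this
    rw [hh, add_sub_cancel] at this
    simpa using this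
  · intro R hR η hη δ hδ
    obtain ⟨t₁, ht₁, h1⟩ := hu.init (R + h) (half_pos hη) hδ
    refine ⟨t₁, ht₁, fun t ht htt x hx hx0 hxh => ?_⟩
    rw [sub_zero] at hx0
    rw [sub_neg_eq_add] at hxh
    have hpos : 0 < h := by rw [hh]; linarith
    have i1 := abs_lt.1 (h1 t ht htt x (by linarith) hx0)
    have i2 := abs_lt.1 (h1 t ht htt (x + h)
      ((abs_add_le x h).trans (by rw [abs_of_pos hpos]; linarith)) hxh)
    have i3 : (if x + h ≤ 0 then α else 0) ≤ (if x ≤ 0 then α else 0) := by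
      split_ifs <;> linarith
    simp only [add_zero, zero_mul]
    linarith [i1.1, i2.2]

/-- Finite speed of propagation to the right. -/
lemma heaviside_le_exp {f u : ℝ → ℝ → ℝ} {α K M : ℝ} {ωα : ℝ → ℝ} (hK : 0 ≤ K) (hα : 0 ≤ α)
    (hf : Continuous (Function.uncurry f)) (hf0 : ∀ t, f t 0 = 0)
    (hL : UnifLip f K M) (hu : IsHeavisideSol f α 0 ωα u) (hωM : ∀ t, ωα t ≤ M)
    {x t : ℝ} (ht : 0 < t) : u x t ≤ α * exp (-x + (1 + K) * t) := by
  have absu : ∀ x t, 0 < t → |u x t| ≤ M := fun x t ht => by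
    rw [abs_of_nonneg (hu.2.1 x t ht).1]; exact (hu.2.1 x t ht).2.trans (hωM t)
  have hz : IsSolOn f (fun _ _ => (0 : ℝ)) (Ioi 0) :=
    isSolOn_ode (g := fun _ => 0) hf (fun t => by simpa [hf0] using hasDerivAt_const t (0 : ℝ)) _
  have := comparison (τ := t) (ε := 0) (A := α) (a := 0) (b := 0) hK le_rfl hα hL hu.1.reflect hz
    (fun x t ht _ => absu _ _ ht)
    (fun x t ht _ => by simpa using (abs_nonneg _).trans (absu x t ht)) ?_ (-x) t ht le_rfl
  · simpa using this
  · intro R hR η hη δ hδ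
    obtain ⟨t₁, ht₁, h1⟩ := hu.init R hη hδ
    refine ⟨t₁, ht₁, fun t ht htt x hx hx0 _ => ?_⟩
    have i1 := abs_lt.1 (h1 t ht htt (-x) (by rwa [abs_neg]) (by rwa [abs_neg, ← sub_zero x]))
    have i3 : (if -x ≤ 0 then α else 0) ≤ α * exp x := by
      split_ifs with h
      · nlinarith [Real.one_le_exp (by linarith : 0 ≤ x)]
      · positivity
    linarith [i1.2]

/-- Finite speed of propagation to the left. -/
lemma sub_heaviside_le_exp {f u : ℝ → ℝ → ℝ} {α K M : ℝ} {ωα : ℝ → ℝ} (hK : 0 ≤ K) (hα : 0 ≤ α)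
    (hf : Continuous (Function.uncurry f)) (hω : ∀ t, HasDerivAt ωα (f t (ωα t)) t)
    (hω0 : ωα 0 = α) (hωpos : ∀ t, 0 < ωα t)
    (hL : UnifLip f K M) (hu : IsHeavisideSol f α 0 ωα u) (hωM : ∀ t, ωα t ≤ M)
    {x t : ℝ} (ht : 0 < t) : ωα t - u x t ≤ α * exp (x + (1 + K) * t) := by
  have absu : ∀ x t, 0 < t → |u x t| ≤ M := fun x t ht => by
    rw [abs_of_nonneg (hu.2.1 x t ht).1]; exact (hu.2.1 x t ht).2.trans (hωM t)
  have hωc : Continuous ωα := continuous_iff_continuousAt.2 fun t => (hω t).continuousAt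
  have := comparison (τ := t) (ε := 0) (A := α) (a := 0) (b := 0) hK le_rfl hα hL
    (isSolOn_ode hf hω _) hu.1 (fun x t ht _ => by rw [abs_of_pos (hωpos t)]; exact hωM t)
    (fun x t ht _ => absu _ _ ht) ?_ x t ht le_rfl
  · simpa using this
  · intro R hR η hη δ hδ
    obtain ⟨t₁, ht₁, h1⟩ := hu.init R (half_pos hη) hδ
    obtain ⟨t₂, ht₂, h2⟩ := small_time_close hωc (half_pos hη)
    refine ⟨min t₁ t₂, by positivity, fun t ht htt x hx hx0 _ => ?_⟩
    have i1 := abs_lt.1 (h1 t ht (htt.trans_le (min_le_left _ _)) x hx (by rwa [← sub_zero x]))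
    have i2 := abs_lt.1 (h2 t ht (htt.trans_le (min_le_right _ _)))
    have i3 : α - (if x ≤ 0 then α else 0) ≤ α * exp x := by
      split_ifs with h
      · simp; positivity
      · nlinarith [Real.one_le_exp (by linarith : 0 ≤ x)]
    rw [hω0] at i2
    linarith [i1.1, i2.2]

/-! ### Spatial limits -/

/-- If `V(·,0) → g(0)` at `-∞` then `V → g` at `-∞`, uniformly on bounded time intervals, for the
solution `g` of the ODE. -/
lemma limit_forward {f V : ℝ → ℝ → ℝ} (hf : Continuous (Function.uncurry f))
    (hLip : ∀ M, ∃ K, 0 ≤ K ∧ UnifLip f K M) {M : ℝ}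
    (hV : IsSolOn f V univ) (bV : ∀ x t, |V x t| ≤ M) {g : ℝ → ℝ}
    (hg : ∀ t, HasDerivAt g (f t (g t)) t)
    (hlim : Tendsto (fun x => V x 0) atBot (𝓝 (g 0))) (τ : ℝ) {ε : ℝ} (hε : 0 < ε) :
    ∃ X, ∀ x ≤ X, ∀ t, 0 < t → t ≤ τ → |V x t - g t| < ε := by
  have hgc : Continuous g := continuous_iff_continuousAt.2 fun t => (hg t).continuousAt
  obtain ⟨M₁, hM₁⟩ := (isCompact_Icc (a := (0 : ℝ)) (b := max τ 0)).exists_bound_of_continuousOn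
    hgc.continuousOn
  set M' := max M M₁ with hM'
  obtain ⟨K, hK, hL⟩ := hLip M'
  have bV' : ∀ x t, |V x t| ≤ M' := fun x t => (bV x t).trans (le_max_left _ _)
  have bg : ∀ t, 0 ≤ t → t ≤ τ → |g t| ≤ M' := fun t h1 h2 =>
    (hM₁ t ⟨h1, h2.trans (le_max_left _ _)⟩).trans (le_max_right _ _)
  have bg0 : |g 0| ≤ M' := (hM₁ 0 ⟨le_rfl, le_max_right _ _⟩).trans (le_max_right _ _)
  have hM'0 : 0 ≤ M' := (abs_nonneg _).trans bg0
  set ε₁ := ε / (2 * exp (K * τ)) with hε₁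
  have hε₁0 : 0 < ε₁ := by positivity
  obtain ⟨R, hR⟩ := eventually_atBot.1 (hlim.eventually (Metric.ball_mem_nhds _ hε₁0))
  set A := 2 * M' * exp (-R) with hA
  have hA0 : 0 ≤ A := by positivity
  have hin : ∀ x, |V x 0 - g 0| ≤ ε₁ + A * exp x := by
    intro x
    rcases le_total x R with h | h
    · have h1 : |V x 0 - g 0| < ε₁ := hR x h
      have : 0 ≤ A * exp x := by positivity
      linarith
    · have h1 : |V x 0 - g 0| ≤ 2 * M' := by
        have := abs_sub (V x 0) (g 0); linarith [bV' x 0]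
      have h2 : 1 ≤ exp (-R) * exp x := by
        rw [← Real.exp_add]; exact Real.one_le_exp (by linarith)
      have h3 : A * exp x = 2 * M' * (exp (-R) * exp x) := by rw [hA]; ring
      have h4 : 2 * M' * 1 ≤ 2 * M' * (exp (-R) * exp x) := by gcongr
      linarith
  have hgs := isSolOn_ode hf hg univ
  have c1 := comparison_entire (τ := τ) hK hε₁0.le hA0 hL hV hgs (fun x t _ _ => bV' x t)
    (fun x t h1 h2 => bg t h1.le h2) (fun x => (le_abs_self _).trans (hin x))
  have c2 := comparison_entire (τ := τ) hK hε₁0.le hA0 hL hgs hV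
    (fun x t h1 h2 => bg t h1.le h2) (fun x t _ _ => bV' x t)
    (fun x => by rw [← neg_sub]; exact (neg_le_abs _).trans (hin x))
  have hexp : Tendsto (fun x => A * exp (x + (1 + K) * τ)) atBot (𝓝 0) := by
    have : Tendsto (fun x : ℝ => x + (1 + K) * τ) atBot atBot :=
      tendsto_atBot_add_const_right _ _ tendsto_id
    simpa using (Real.tendsto_exp_atBot.comp this).const_mul A
  obtain ⟨X, hX⟩ := eventually_atBot.1 (hexp.eventually (gt_mem_nhds (half_pos hε)))
  refine ⟨X, fun x hx t ht htτ => ?_⟩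
  have h1 : ε₁ * exp (K * t) ≤ ε / 2 := by
    have : exp (K * t) ≤ exp (K * τ) := by gcongr
    calc ε₁ * exp (K * t) ≤ ε₁ * exp (K * τ) := by gcongr
      _ = ε / 2 := by rw [hε₁]; field_simp
  have h2 : A * exp (x + (1 + K) * t) ≤ A * exp (x + (1 + K) * τ) := by gcongr
  have h3 := hX x hx
  rw [abs_lt]
  constructor
  · linarith [c2 x t ht htτ]
  · linarith [c1 x t ht htτ]

/-- Pointwise limits at `-∞` of a bounded entire solution form a solution of the ODE, and the
convergence is locally uniform in time. -/
lemma limit_atBot {f V : ℝ → ℝ → ℝ} {T : ℝ} (hT : 0 < T) (hf : Continuous (Function.uncurry f))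
    (hfper : ∀ t u : ℝ, f (t + T) u = f t u)
    (hLip : ∀ M, ∃ K, 0 ≤ K ∧ UnifLip f K M) {M : ℝ} {ωsol : ℝ → ℝ → ℝ}
    (hωinit : ∀ β : ℝ, ωsol β 0 = β)
    (hωode : ∀ β t : ℝ, HasDerivAt (ωsol β) (f t (ωsol β t)) t)
    (hV : IsSolOn f V univ) (bV : ∀ x t, |V x t| ≤ M) {ω : ℝ → ℝ}
    (hlim : ∀ t, Tendsto (fun x => V x t) atBot (𝓝 (ω t))) :
    (∀ t, HasDerivAt ω (f t (ω t)) t) ∧ LimitAtMinusInf V ω := by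
  have hfn : ∀ (n : ℕ) t v, f (t + -(n * T)) v = f t v := fun n t v => by
    rw [← sub_eq_add_neg]
    exact Function.Periodic.sub_nat_mul_eq (f := fun t => f t v) (fun t => hfper t v) n
  have hn : ∀ (n : ℕ) (τ ε : ℝ), 0 < ε → ∃ X, ∀ x ≤ X, ∀ t, 0 < t → t ≤ τ →
      |V x (t + -(n * T)) - ωsol (ω (-(n * T))) t| < ε := by
    intro n τ ε hε
    obtain ⟨X, hX⟩ := limit_forward hf hLip
      (hV.shift 0 (-(n * T)) (J := univ) (g := f) (fun _ _ => mem_univ _)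
        (fun t v => (hfn n t v).symm))
      (fun x t => bV _ _) (hωode (ω (-(n * T))))
      (by simpa [hωinit] using hlim (-(n * T))) τ hε
    exact ⟨X, fun x hx t ht htτ => by simpa using hX x hx t ht htτ⟩
  have heq : ∀ (n : ℕ) t, 0 < t → ω (t + -(n * T)) = ωsol (ω (-(n * T))) t := by
    intro n t ht
    refine tendsto_nhds_unique (hlim (t + -(n * T))) ?_
    rw [Metric.tendsto_nhds]
    intro ε hε
    obtain ⟨X, hX⟩ := hn n t ε hε
    filter_upwards [eventually_le_atBot X] with x hx
    exact hX x hx t ht le_rfl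
  have harch : ∀ t : ℝ, ∃ n : ℕ, 0 < t + n * T := fun t => by
    obtain ⟨n, hn⟩ := exists_nat_gt (-t / T)
    refine ⟨n, ?_⟩
    rw [div_lt_iff₀ hT] at hn
    linarith
  constructor
  · intro t
    obtain ⟨n, hnt⟩ := harch t
    have e : ω =ᶠ[𝓝 t] fun s => ωsol (ω (-(n * T))) (s + n * T) := by
      filter_upwards [lt_mem_nhds (by linarith : -(n * T) < t)] with s hs
      rw [← heq n (s + n * T) (by linarith)]
      simp
    have h := ((hωode (ω (-(n * T))) (t + n * T)).comp_add_const t (n * T)).congr_of_eventuallyEq e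
    rw [← heq n (t + n * T) hnt] at h
    have h2 := hfn n (t + n * T) (ω t)
    simp only [add_neg_cancel_right] at h h2
    rwa [← h2] at h
  · intro S hS ε hε
    obtain ⟨b, hb⟩ := hS.bddAbove
    obtain ⟨a, ha⟩ := hS.bddBelow
    obtain ⟨n, hna⟩ := harch a
    obtain ⟨X, hX⟩ := hn n (b + n * T) ε hε
    refine ⟨X, fun x hx t ht => ?_⟩
    have h1 : 0 < t + n * T := by linarith [ha ht]
    have h2 := hX x hx (t + n * T) h1 (by linarith [hb ht])
    rw [← heq n _ h1] at h2
    simpa using h2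

/-! ### Entire solutions nonincreasing in space -/

/-- Strong maximum principle for `V` and its translates: a bounded entire solution which is
nonincreasing in `x` is either strictly decreasing at time `0` or independent of `x`. -/
lemma strictAnti_or_const {f V : ℝ → ℝ → ℝ} {K M : ℝ} (hK : 0 ≤ K) (hL : UnifLip f K M)
    (hV : IsSolOn f V univ) (bV : ∀ x t, |V x t| ≤ M) (anti : ∀ t, Antitone (fun x => V x t)) :
    StrictAnti (fun x => V x 0) ∨ ∀ x y t, V x t = V y t := by
  have hsh : ∀ h, IsSolOn f (fun x t => V (x + h) t) univ := fun h => by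
    simpa using hV.shift h 0 (J := univ) (g := f) (fun _ _ => mem_univ _) (fun t v => by simp)
  by_cases hs : StrictAnti (fun x => V x 0)
  · exact Or.inl hs
  refine Or.inr ?_
  obtain ⟨x₀, h, hh, he⟩ : ∃ x₀ h, 0 < h ∧ V x₀ 0 ≤ V (x₀ + h) 0 := by
    simp only [StrictAnti, not_forall, not_lt] at hs
    obtain ⟨a, b, hab, h⟩ := hs
    exact ⟨a, b - a, sub_pos.2 hab, by simpa using h⟩
  have per : ∀ x t, t < 0 → V x t ≤ V (x + h) t := by
    intro x t ht
    by_contra! hlt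
    have := strong_max hK hL hV (hsh h) bV (fun _ _ => bV _ _)
      (fun x t => anti t (by linarith)) hlt x₀ 0 ht
    linarith
  have iter : ∀ (n : ℕ) x t, t < 0 → V x t ≤ V (x + n * h) t := by
    intro n
    induction n with
    | zero => intro x t _; simp
    | succ n ih =>
      intro x t ht
      refine (ih x t ht).trans ((per _ t ht).trans_eq ?_)
      push_cast; ring_nf
  have key : ∀ x y t, t < 0 → V x t ≤ V y t := by
    intro x y t ht
    obtain ⟨n, hn⟩ := exists_nat_gt ((y - x) / h)
    rw [div_lt_iff₀ hh] at hn
    exact (iter n x t ht).trans (anti t (by linarith))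
  have all : ∀ x y t, V x t ≤ V y t := by
    intro x y t
    rcases lt_or_ge t 0 with ht | ht
    · exact key x y t ht
    · have := order_forward (s := -1) hK hL hV (hsh (y - x)) bV (fun _ _ => bV _ _)
        (fun z => key _ _ _ (by norm_num)) x t (by linarith)
      simpa using this
  exact fun x y t => le_antisymm (all x y t) (all y x t)

/-- A bounded solution of the ODE is determined by one value. -/
lemma ode_unique {f : ℝ → ℝ → ℝ} {K M : ℝ} (hK : 0 ≤ K) (hL : UnifLip f K M) {g h : ℝ → ℝ}
    (hg : ∀ t, HasDerivAt g (f t (g t)) t) (hh : ∀ t, HasDerivAt h (f t (h t)) t)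
    (bg : ∀ t, |g t| ≤ M) (bh : ∀ t, |h t| ≤ M) {t₀ : ℝ} (e : g t₀ = h t₀) : g = h := by
  refine ODE_solution_unique_univ (v := f) (s := fun _ => Icc (-M) M) (K := ⟨K, hK⟩) (t₀ := t₀)
    (fun t => ?_) (fun t => ⟨hg t, abs_le.1 (bg t)⟩) (fun t => ⟨hh t, abs_le.1 (bh t)⟩) e
  refine LipschitzOnWith.of_dist_le_mul fun u hu v hv => ?_
  rw [Real.dist_eq, Real.dist_eq]
  exact hL t u v (abs_le.2 hu) (abs_le.2 hv)

lemma periodic_of_const {f V : ℝ → ℝ → ℝ} {K M T lam : ℝ} (hK : 0 ≤ K) (hL : UnifLip f K M)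
    (hfper : ∀ t u : ℝ, f (t + T) u = f t u) (hf0 : ∀ t : ℝ, f t 0 = 0)
    (hV : IsSolOn f V univ) (bV : ∀ x t, |V x t| ≤ M) (V0 : ∀ x t, 0 ≤ V x t)
    (hlam : 0 < lam) (h0 : V 0 0 = lam) (hT : V 0 T = lam) (hc : ∀ x y t, V x t = V y t) :
    IsPeriodicSol f T (V 0) ∧ ∀ t, 0 < V 0 t := by
  have hode : ∀ t, HasDerivAt (V 0) (f t (V 0 t)) t := by
    obtain ⟨ut, ux, uxx, h1, h2, h3, -, -, -, e⟩ := hV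
    intro t
    have z1 : ∀ x, ux x t = 0 := fun x => by
      have := h2 x t (mem_univ _)
      rw [show (fun y => V y t) = fun _ => V 0 t from funext fun y => hc y 0 t] at this
      exact this.unique (hasDerivAt_const x _)
    have z2 : uxx 0 t = 0 := by
      have := h3 0 t (mem_univ _)
      rw [show (fun y => ux y t) = fun _ => 0 from funext z1] at this
      exact this.unique (hasDerivAt_const 0 _)
    have := h1 0 t (mem_univ _)
    rwa [e 0 t (mem_univ _), z2, zero_add] at this
  have hodeT : ∀ t, HasDerivAt (fun t => V 0 (t + T)) (f t (V 0 (t + T))) t := fun t => by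
    have := (hode (t + T)).comp_add_const t T
    rwa [hfper] at this
  refine ⟨⟨hode, fun t => ?_⟩, fun t => ?_⟩
  · exact congrFun (ode_unique hK hL hodeT hode (fun _ => bV _ _) (bV _) (t₀ := 0)
      (by simp [h0, hT])) t
  · refine lt_of_le_of_ne (V0 0 t) fun hz => ?_
    have := congrFun (ode_unique (h := fun _ => 0) hK hL hode
      (fun t => by simpa [hf0] using hasDerivAt_const t (0 : ℝ)) (bV _)
      (fun _ => by simpa using (abs_nonneg _).trans (bV 0 0)) hz.symm) 0
    simp only [h0] at this
    linarith

/-- If `V` is strictly decreasing at time `0`, every translate of `V(·, · + T)` is ordered with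
`V`, and `V(·, T)` neither stays below nor above the level `V(0, 0)`, then some translate of
`V(·, · + T)` coincides with `V`. At time `0` this is connectedness of the set of shifts. For
negative times only the ordering is available, whose direction is dictated by time `0`. -/
lemma exists_shift {f V : ℝ → ℝ → ℝ} {K M T : ℝ} (hK : 0 ≤ K) (hL : UnifLip f K M)
    (hfper : ∀ t u : ℝ, f (t + T) u = f t u)
    (hV : IsSolOn f V univ) (bV : ∀ x t, |V x t| ≤ M) (strict : StrictAnti (fun x => V x 0))
    (hord : ∀ t a, (∀ x, V (x + a) (t + T) ≤ V x t) ∨ (∀ x, V x t ≤ V (x + a) (t + T)))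
    (esc₁ : ¬ ∀ y, V y T < V 0 0) (esc₂ : ¬ ∀ y, V 0 0 < V y T) :
    ∃ a, ∀ x t, V x t = V (x + a) (t + T) := by
  have cV : Continuous (fun q : ℝ × ℝ => V q.1 q.2) := by
    simpa [continuousOn_univ] using hV.continuousOn isOpen_univ
  have ca : ∀ x t, Continuous (fun a => V (x + a) t) := fun x t =>
    cV.comp (f := fun a => (x + a, t)) (by fun_prop)
  have hsh : ∀ a, IsSolOn f (fun x t => V (x + a) (t + T)) univ := fun a =>
    hV.shift a T (J := univ) (g := f) (fun _ _ => mem_univ _) (fun t v => (hfper t v).symm)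
  obtain ⟨a, ha⟩ : ∃ a, ∀ x, V x 0 = V (x + a) T := by
    have c1 : IsClosed {a | ∀ x, V (x + a) T ≤ V x 0} := by
      simp only [ofPred_forall]
      exact isClosed_iInter fun x => isClosed_le (ca x T) continuous_const
    have c2 : IsClosed {a | ∀ x, V x 0 ≤ V (x + a) T} := by
      simp only [ofPred_forall]
      exact isClosed_iInter fun x => isClosed_le continuous_const (ca x T)
    have hor : ∀ a, (∀ x, V (x + a) T ≤ V x 0) ∨ (∀ x, V x 0 ≤ V (x + a) T) := fun a => by
      simpa using hord 0 a
    have n1 : {a | ∀ x, V (x + a) T ≤ V x 0}.Nonempty := by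
      by_contra hne
      refine esc₂ fun y => ?_
      have h1 := (hor (y + 1)).resolve_left (fun h => hne ⟨_, h⟩) (-1)
      have h2 : V 0 0 < V (-1) 0 := strict (by norm_num)
      rw [show -1 + (y + 1) = y by ring] at h1
      linarith
    have n2 : {a | ∀ x, V x 0 ≤ V (x + a) T}.Nonempty := by
      by_contra hne
      refine esc₁ fun y => ?_
      have h1 := (hor (y - 1)).resolve_right (fun h => hne ⟨_, h⟩) 1
      have h2 : V 1 0 < V 0 0 := strict (by norm_num)
      rw [show 1 + (y - 1) = y by ring] at h1
      linarith
    obtain ⟨a, -, h1, h2⟩ := isPreconnected_closed_iff.1 isPreconnected_univ _ _ c1 c2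
      (fun a _ => hor a) (by simpa using n1) (by simpa using n2)
    exact ⟨a, fun x => le_antisymm (h2 x) (h1 x)⟩
  refine ⟨a, fun x t => ?_⟩
  rcases le_or_gt 0 t with ht | ht
  · exact le_antisymm
      (order_forward hK hL hV (hsh a) bV (fun _ _ => bV _ _)
        (fun x => by simpa using (ha x).le) x t ht)
      (order_forward hK hL (hsh a) hV (fun _ _ => bV _ _) bV
        (fun x => by simpa using (ha x).ge) x t ht)
  · have up : ∀ b, a < b → V (x + b) (t + T) ≤ V x t := by
      intro b hb
      refine (hord t b).resolve_right (fun h => ?_) x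
      have := order_forward hK hL hV (hsh b) bV (fun _ _ => bV _ _) h 0 0 ht.le
      have h2 : V (b - a) 0 < V 0 0 := strict (sub_pos.2 hb)
      rw [ha (b - a)] at h2
      simp only [zero_add, sub_add_cancel] at this h2
      linarith
    have down : ∀ b, b < a → V x t ≤ V (x + b) (t + T) := by
      intro b hb
      refine (hord t b).resolve_left (fun h => ?_) x
      have := order_forward hK hL (hsh b) hV (fun _ _ => bV _ _) bV h 0 0 ht.le
      have h2 : V 0 0 < V (b - a) 0 := strict (sub_neg.2 hb)
      rw [ha (b - a)] at h2
      simp only [zero_add, sub_add_cancel] at this h2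
      linarith
    have hc := (ca x (t + T)).tendsto a
    exact le_antisymm
      (ge_of_tendsto (hc.mono_left nhdsWithin_le_nhds)
        (eventually_mem_nhdsWithin.mono fun b (hb : b ∈ Iio a) => down b hb))
      (le_of_tendsto (hc.mono_left nhdsWithin_le_nhds)
        (eventually_mem_nhdsWithin.mono fun b (hb : b ∈ Ioi a) => up b hb))

/-! ### Passage to the limit -/

/-- A real sequence whose decrements eventually exceed `R` falls below every line of slope
`-r` with `r < R`. -/
lemma false_of_fast_decrease {s : ℕ → ℝ} {R r C : ℝ} (hr : r < R) {J : ℕ}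
    (h1 : ∀ j ≥ J, s (j + 1) ≤ s j - R) (h2 : ∀ j ≥ J, -(r * j) - C ≤ s j) : False := by
  have hn : ∀ n : ℕ, s (J + n) ≤ s J - n * R := by
    intro n
    induction n with
    | zero => simp
    | succ n ih =>
      have := h1 (J + n) (by omega)
      rw [← add_assoc]
      push_cast
      linarith
  obtain ⟨n, hn'⟩ := exists_nat_gt ((s J + r * J + C) / (R - r))
  rw [div_lt_iff₀ (sub_pos.2 hr)] at hn'
  have a := hn n
  have b := h2 (J + n) (by omega)
  push_cast at b
  nlinarith

section Limit

variable {f u₀ V : ℝ → ℝ → ℝ} {ωα : ℝ → ℝ} {α K M T lam : ℝ} {ℓ : ℕ → ℝ}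

lemma IsULimit.tendsto (hV : IsULimit u₀ ℓ T V) (x t : ℝ) :
    Tendsto (fun j : ℕ => u₀ (x + ℓ j) (t + j * T)) atTop (𝓝 (V x t)) := by
  refine Metric.tendsto_atTop.2 fun ε hε => ?_
  obtain ⟨J, hJ⟩ := hV {(x, t)} isCompact_singleton ε hε
  exact ⟨J, fun j hj => hJ j hj (x, t) rfl⟩

lemma eventually_pos (hT : 0 < T) (t : ℝ) : ∀ᶠ j : ℕ in atTop, 0 < t + j * T := by
  obtain ⟨n, hn⟩ := exists_nat_gt (-t / T)
  rw [div_lt_iff₀ hT] at hn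
  filter_upwards [eventually_ge_atTop n] with j hj
  have : (n : ℝ) * T ≤ j * T := by gcongr
  linarith

/-- The limit `V` is steeper than every entire solution between `0` and `ωα`. -/
lemma limit_sign_pattern (hT : 0 < T) (hfper : ∀ t u : ℝ, f (t + T) u = f t u)
    (hK : 0 ≤ K) (hL : UnifLip f K M) (hu : IsHeavisideSol f α 0 ωα u₀) (hω : Continuous ωα)
    (hω0 : ωα 0 = α) (hωM : ∀ t, ωα t ≤ M) (hωper : ∀ t, ωα (t + T) = ωα t)
    (hV : IsULimit u₀ ℓ T V) {W : ℝ → ℝ → ℝ} (hW : IsSolOn f W univ)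
    (bW : ∀ x t, 0 ≤ W x t ∧ W x t ≤ ωα t) {x y t : ℝ} (hxy : x < y) (h1 : V x t < W x t) :
    V y t ≤ W y t := by
  by_contra! h2
  obtain ⟨j, hj1, hj2, hj⟩ := (((hV.tendsto x t).eventually (gt_mem_nhds h1)).and
    (((hV.tendsto y t).eventually (lt_mem_nhds h2)).and (eventually_pos hT t))).exists
  have hfn : ∀ t v, f (t + -(j * T)) v = f t v := fun t v => by
    rw [← sub_eq_add_neg]
    exact Function.Periodic.sub_nat_mul_eq (f := fun t => f t v) (fun t => hfper t v) j
  have hωn : ∀ t, ωα (t + -(j * T)) = ωα t := fun t => by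
    rw [← sub_eq_add_neg]
    exact Function.Periodic.sub_nat_mul_eq hωper j
  have := sign_pattern hK hL hu hω hω0 hωM
    (hW.shift (-ℓ j) (-(j * T)) (J := Ioi 0) (g := f) (fun _ _ => mem_univ _)
      (fun t v => (hfn t v).symm))
    (fun x t _ => ⟨(bW _ _).1, (bW _ _).2.trans_eq (hωn t)⟩)
    (x := x + ℓ j) (y := y + ℓ j) hj (by linarith) (by simpa using hj1)
  simp only [add_neg_cancel_right] at this
  linarith

lemma limit_ordered (hT : 0 < T) (hfper : ∀ t u : ℝ, f (t + T) u = f t u)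
    (hK : 0 ≤ K) (hL : UnifLip f K M) (hu : IsHeavisideSol f α 0 ωα u₀) (hω : Continuous ωα)
    (hω0 : ωα 0 = α) (hωM : ∀ t, ωα t ≤ M) (hωper : ∀ t, ωα (t + T) = ωα t)
    (hV : IsULimit u₀ ℓ T V) (hVsol : IsSolOn f V univ)
    (bV : ∀ x t, 0 ≤ V x t ∧ V x t ≤ ωα t) (t a : ℝ) :
    (∀ x, V (x + a) (t + T) ≤ V x t) ∨ (∀ x, V x t ≤ V (x + a) (t + T)) := by
  by_contra! hcon
  obtain ⟨⟨x, hx⟩, y, hy⟩ := hcon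
  have hωT : ∀ t, ωα (t + -T) = ωα t := fun t => by
    rw [← hωper (t + -T), neg_add_cancel_right]
  rcases lt_trichotomy x y with h | rfl | h
  · have := limit_sign_pattern hT hfper hK hL hu hω hω0 hωM hωper hV
      (hVsol.shift a T (J := univ) (g := f) (fun _ _ => mem_univ _)
        (fun t v => (hfper t v).symm))
      (fun x t => ⟨(bV _ _).1, (bV _ _).2.trans_eq (hωper t)⟩) h hx
    linarith
  · linarith
  · have := limit_sign_pattern hT hfper hK hL hu hω hω0 hωM hωper hV
      (hVsol.shift (-a) (-T) (J := univ) (g := f) (fun _ _ => mem_univ _)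
        (fun t v => by rw [← hfper (t + -T), neg_add_cancel_right]))
      (fun x t => ⟨(bV _ _).1, (bV _ _).2.trans_eq (hωT t)⟩) (x := y + a) (y := x + a)
      (t := t + T) (by linarith) (by simpa using hy)
    simp only [add_neg_cancel_right] at this
    linarith

/-- `V(·, T)` does not stay below `lam`: otherwise the level `lam` of `u₀` would move left
faster than the speed `1 + K` allows. -/
lemma not_forall_lt (hT : 0 < T) (hα : 0 < α) (hf : Continuous (Function.uncurry f))
    (hK : 0 ≤ K) (hL : UnifLip f K M) (hu : IsHeavisideSol f α 0 ωα u₀)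
    (hωode : ∀ t, HasDerivAt ωα (f t (ωα t)) t)
    (hω0 : ωα 0 = α) (hωpos : ∀ t, 0 < ωα t) (hωM : ∀ t, ωα t ≤ M)
    (hωper : ∀ t, ωα (t + T) = ωα t) (hlam : lam < α)
    (hℓ : ∀ j : ℕ, 1 ≤ j → u₀ (ℓ j) (j * T) = lam) (hV : IsULimit u₀ ℓ T V) :
    ¬ ∀ y, V y T < lam := by
  intro hlt
  set R := (1 + K) * T + 1 with hR
  obtain ⟨J, hJ⟩ := eventually_atTop.1
    ((hV.tendsto (-R) T).eventually (gt_mem_nhds (hlt (-R))))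
  refine false_of_fast_decrease (s := ℓ) (R := R) (r := (1 + K) * T)
    (C := -log ((α - lam) / α)) (J := max J 1) (by linarith) (fun j hj => ?_) (fun j hj => ?_)
  · have hj1 : 1 ≤ j := (le_max_right _ _).trans hj
    have h1 := hJ j ((le_max_left _ _).trans hj)
    by_contra! hc
    have hanti := heaviside_antitone hK hα.le hL hu hωM (t := T + j * T) (by positivity)
      (show -R + ℓ j ≤ ℓ (j + 1) by linarith)
    have h2 := hℓ (j + 1) (by omega)
    rw [show ((j + 1 : ℕ) : ℝ) * T = T + j * T by push_cast; ring] at h2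
    simp only [h2] at hanti
    linarith
  · have hj1 : 1 ≤ j := (le_max_right _ _).trans hj
    have hjT : 0 < (j : ℝ) * T := by
      have : (0 : ℝ) < j := by exact_mod_cast hj1
      positivity
    have h1 := sub_heaviside_le_exp hK hα.le hf hωode hω0 hωpos hL hu hωM (x := ℓ j) hjT
    have hω : ωα (j * T) = α := by
      rw [Function.Periodic.nat_mul_eq hωper j, hω0]
    rw [hω, hℓ j hj1, ← div_le_iff₀' hα] at h1
    have := (log_le_iff_le_exp (div_pos (sub_pos.2 hlam) hα)).2 h1
    linarith

lemma not_forall_gt (hT : 0 < T) (hα : 0 < α) (hf : Continuous (Function.uncurry f))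
    (hf0 : ∀ t, f t 0 = 0)
    (hK : 0 ≤ K) (hL : UnifLip f K M) (hu : IsHeavisideSol f α 0 ωα u₀)
    (hωM : ∀ t, ωα t ≤ M) (hlam : 0 < lam)
    (hℓ : ∀ j : ℕ, 1 ≤ j → u₀ (ℓ j) (j * T) = lam) (hV : IsULimit u₀ ℓ T V) :
    ¬ ∀ y, lam < V y T := by
  intro hlt
  set R := (1 + K) * T + 1 with hR
  obtain ⟨J, hJ⟩ := eventually_atTop.1
    ((hV.tendsto R T).eventually (lt_mem_nhds (hlt R)))
  refine false_of_fast_decrease (s := fun j => -ℓ j) (R := R) (r := (1 + K) * T)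
    (C := -log (lam / α)) (J := max J 1) (by linarith) (fun j hj => ?_) (fun j hj => ?_)
  · have hj1 : 1 ≤ j := (le_max_right _ _).trans hj
    have h1 := hJ j ((le_max_left _ _).trans hj)
    by_contra! hc
    have hanti := heaviside_antitone hK hα.le hL hu hωM (t := T + j * T) (by positivity)
      (show ℓ (j + 1) ≤ R + ℓ j by linarith)
    have h2 := hℓ (j + 1) (by omega)
    rw [show ((j + 1 : ℕ) : ℝ) * T = T + j * T by push_cast; ring] at h2
    simp only [h2] at hanti
    linarith
  · have hj1 : 1 ≤ j := (le_max_right _ _).trans hj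
    have hjT : 0 < (j : ℝ) * T := by
      have : (0 : ℝ) < j := by exact_mod_cast hj1
      positivity
    have h1 := heaviside_le_exp hK hα.le hf hf0 hL hu hωM (x := ℓ j) hjT
    rw [hℓ j hj1, ← div_le_iff₀' hα] at h1
    have := (log_le_iff_le_exp (div_pos hlam hα)).2 h1
    linarith

end Limit

/-- A bounded solution, nonincreasing in `x` and not constant in `x` at time `0`, which is invariant
under a space-time shift, is a pulsating front. -/
lemma front_of_shift {f V : ℝ → ℝ → ℝ} {T M a : ℝ} (hT : 0 < T)
    (hf : Continuous (Function.uncurry f)) (hfper : ∀ t u : ℝ, f (t + T) u = f t u)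
    (hLip : ∀ M, ∃ K, 0 ≤ K ∧ UnifLip f K M) {ωsol : ℝ → ℝ → ℝ}
    (hωinit : ∀ β : ℝ, ωsol β 0 = β)
    (hωode : ∀ β t : ℝ, HasDerivAt (ωsol β) (f t (ωsol β t)) t)
    (hV : IsSolOn f V univ) (bV : ∀ x t, |V x t| ≤ M) (anti : ∀ t, Antitone (fun x => V x t))
    (strict : V 1 0 < V 0 0) (ha : ∀ x t, V x t = V (x + a) (t + T)) :
    ∃ (ωa ωb : ℝ → ℝ) (c : ℝ), IsPeriodicSol f T ωa ∧ IsPeriodicSol f T ωb ∧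
      (∃ t : ℝ, ωa t ≠ ωb t) ∧ IsPulsatingFront f T ωa ωb V c := by
  have bb : ∀ t, BddBelow (range fun x => V x t) := fun t =>
    ⟨-M, by rintro _ ⟨x, rfl⟩; exact (abs_le.1 (bV x t)).1⟩
  have ba : ∀ t, BddAbove (range fun x => V x t) := fun t =>
    ⟨M, by rintro _ ⟨x, rfl⟩; exact (abs_le.1 (bV x t)).2⟩
  have l1 : ∀ t, Tendsto (fun x => V x t) atBot (𝓝 (⨆ x, V x t)) := fun t =>
    tendsto_atBot_ciSup (anti t) (ba t)
  have l2 : ∀ t, Tendsto (fun x => V x t) atTop (𝓝 (⨅ x, V x t)) := fun t =>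
    tendsto_atTop_ciInf (anti t) (bb t)
  obtain ⟨o1, m1⟩ := limit_atBot hT hf hfper hLip hωinit hωode hV bV l1
  obtain ⟨o2, m2⟩ := limit_atBot hT hf hfper hLip hωinit hωode hV.reflect
    (fun x t => bV (-x) t) (fun t => (l2 t).comp tendsto_neg_atBot_atTop)
  refine ⟨_, _, -a / T, ⟨o1, fun t => ?_⟩, ⟨o2, fun t => ?_⟩, ⟨0, ?_⟩, hV,
    ⟨-a, rfl, fun x t => by rw [sub_neg_eq_add]; exact ha x t⟩, m1, ?_⟩
  · refine tendsto_nhds_unique ((l1 (t + T)).comp (tendsto_atBot_add_const_right atBot a tendsto_id))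
      ((l1 t).congr fun x => ha x t)
  · refine tendsto_nhds_unique ((l2 (t + T)).comp (tendsto_atTop_add_const_right atTop a tendsto_id))
      ((l2 t).congr fun x => ha x t)
  · have h1 := le_ciSup (ba 0) 0
    have h2 := ciInf_le (bb 0) 1
    exact (h2.trans_lt (strict.trans_le h1)).ne'
  · intro S hS ε hε
    obtain ⟨X, hX⟩ := m2 S hS ε hε
    refine ⟨-X, fun x hx t ht => ?_⟩
    have := hX (-x) (by linarith) t ht
    simpa only [neg_neg] using this

/-- **Lemma 3.5.** Under (H1), the entire solution `u_∞(·,·;λ)` is either a positive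
`T`-periodic solution of the ODE (i.e. independent of `x`) or a pulsating traveling front
connecting two distinct `T`-periodic solutions. -/
theorem shifted_limit_dichotomy
    (f : ℝ → ℝ → ℝ) (T α : ℝ) (ωsol : ℝ → ℝ → ℝ)
    (hT : 0 < T)
    (hf : ContDiff ℝ 2 (Function.uncurry f))
    (hfper : ∀ t u : ℝ, f (t + T) u = f t u)
    (hf0 : ∀ t : ℝ, f t 0 = 0)
    (hωinit : ∀ β : ℝ, ωsol β 0 = β)
    (hωode : ∀ β t : ℝ, HasDerivAt (ωsol β) (f t (ωsol β t)) t)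
    (hα : 0 < α) (hαfix : ωsol α T = α)
    (hαper : ∀ t : ℝ, ωsol α (t + T) = ωsol α t)
    (hαpos : ∀ t : ℝ, 0 < ωsol α t)
    (hH1 : HypH1 f α (ωsol α))
    (lam : ℝ) (hlam : lam ∈ Set.Ioo 0 α)
    (u₀ : ℝ → ℝ → ℝ) (hu₀ : IsHeavisideSol f α 0 (ωsol α) u₀)
    (ℓ : ℕ → ℝ) (hℓ : ∀ j : ℕ, 1 ≤ j → u₀ (ℓ j) ((j : ℝ) * T) = lam)
    (V : ℝ → ℝ → ℝ) (hV : IsULimit u₀ ℓ T V) (hVsol : IsSolOn f V Set.univ) :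
    (∃ ψ : ℝ → ℝ, IsPeriodicSol f T ψ ∧ (∀ t : ℝ, 0 < ψ t) ∧ ∀ x t : ℝ, V x t = ψ t) ∨
    (∃ (ωa ωb : ℝ → ℝ) (c : ℝ), IsPeriodicSol f T ωa ∧ IsPeriodicSol f T ωb ∧
      (∃ t : ℝ, ωa t ≠ ωb t) ∧ IsPulsatingFront f T ωa ωb V c) := by
  have hfc : Continuous (Function.uncurry f) := hf.continuous
  have hLip : ∀ M, ∃ K, 0 ≤ K ∧ UnifLip f K M := exists_unifLip hT hf hfper
  have hω : Continuous (ωsol α) :=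
    continuous_iff_continuousAt.2 fun t => (hωode α t).continuousAt
  obtain ⟨M, hM⟩ : ∃ M, ∀ t, ωsol α t ≤ M := by
    obtain ⟨M, hM⟩ := (Function.Periodic.compact_of_continuous (f := ωsol α) hαper hT.ne' hω).bddAbove
    exact ⟨M, fun t => hM ⟨t, rfl⟩⟩
  obtain ⟨K, hK, hL⟩ := hLip M
  have hωn : ∀ t (j : ℕ), ωsol α (t + j * T) = ωsol α t := fun t j =>
    (Function.Periodic.nat_mul (f := ωsol α) hαper j) t
  have bV : ∀ x t, 0 ≤ V x t ∧ V x t ≤ ωsol α t := fun x t =>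
    ⟨ge_of_tendsto (hV.tendsto x t) ((eventually_pos hT t).mono fun j hj => (hu₀.2.1 _ _ hj).1),
      le_of_tendsto (hV.tendsto x t) ((eventually_pos hT t).mono fun j hj =>
        (hu₀.2.1 _ _ hj).2.trans_eq (hωn t j))⟩
  have absV : ∀ x t, |V x t| ≤ M := fun x t => by
    rw [abs_of_nonneg (bV x t).1]; exact (bV x t).2.trans (hM t)
  have anti : ∀ t, Antitone (fun x => V x t) := fun t x y hxy =>
    le_of_tendsto_of_tendsto (hV.tendsto y t) (hV.tendsto x t)
      ((eventually_pos hT t).mono fun j hj =>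
        heaviside_antitone hK hα.le hL hu₀ hM hj (by linarith))
  have h00 : V 0 0 = lam := by
    refine tendsto_nhds_unique (hV.tendsto 0 0) (tendsto_const_nhds.congr' ?_)
    filter_upwards [eventually_ge_atTop 1] with j hj
    simp [hℓ j hj]
  have esc₁ := not_forall_lt hT hα hfc hK hL hu₀ (hωode α) (hωinit α) hαpos hM hαper hlam.2 hℓ hV
  have esc₂ := not_forall_gt hT hα hfc hf0 hK hL hu₀ hM hlam.1 hℓ hV
  have hord := limit_ordered hT hfper hK hL hu₀ hω (hωinit α) hM hαper hV hVsol bV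
  rcases strictAnti_or_const hK hL hVsol absV anti with hs | hc
  · obtain ⟨a, ha⟩ := exists_shift hK hL hfper hVsol absV hs hord (by rwa [h00]) (by rwa [h00])
    exact Or.inr (front_of_shift hT hfc hfper hLip hωinit hωode hVsol absV anti
      (hs (by norm_num)) ha)
  · have hVT : V 0 T = lam := by
      rcases lt_trichotomy (V 0 T) lam with h | h | h
      · exact absurd (fun y => hc y 0 T ▸ h) esc₁
      · exact h
      · exact absurd (fun y => hc y 0 T ▸ h) esc₂
    obtain ⟨h1, h2⟩ := periodic_of_const hK hL hfper hf0 hVsol absV (fun x t => (bV x t).1)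
      hlam.1 h00 hVT hc
    exact Or.inl ⟨V 0, h1, h2, fun x t => hc x 0 t⟩

end
end

section
/- Let ω̄ be a T-periodic solution of the ODE ω' = f(t,ω) and suppose μ̄ := −(1/T)∫₀ᵀ f_u(t,ω̄(t)) dt < 0. Let φ̄(t) = exp( ∫₀ᵗ f_u(s,ω̄(s)) ds − (t/T)∫₀ᵀ f_u(s,ω̄(s)) ds ). Then there exists ε₀ > 0 such that for every integer n ≥ 1 the T-periodic function φ_n(t) := ω̄(t) − (ε₀/n)·φ̄(t) satisfies φ_n'(t) > f(t, φ_n(t)) for all t ∈ ℝ (i.e., φ_n is a strict T-periodic supersolution of the ODE); moreover φ_n(t) < ω̄(t) for all t and n, and φ_n → ω̄ uniformly on ℝ as n → ∞. -/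
open Real Filter Topology Set

noncomputable section

/-!
The function `φ` solves `φ' = (f_u(t, ω̄) + μ) φ`, is positive and `T`-periodic, hence bounded.
With `δ = ε₀ / n`, the mean value theorem gives `f(t, ω̄ - δφ) = f(t, ω̄) - δ φ f_u(t, ξ)` for some
`ξ` between `ω̄ - δφ` and `ω̄`, so the strict supersolution inequality amounts to
`f_u(t, ω̄) - f_u(t, ξ) < -μ`. As `-μ > 0`, this holds once `ω̄ - ξ` is small, uniformly in `t` by
continuity of `f_u` and periodicity (`exists_uniform_gap`).
-/

/-- The partial derivative in the second variable is the value of the total derivative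
at `(0, 1)`, so it is jointly continuous. -/
lemma continuous_partial {f fu : ℝ → ℝ → ℝ} (hf : ContDiff ℝ 2 (Function.uncurry f))
    (hfu : ∀ t u : ℝ, HasDerivAt (fun v => f t v) (fu t u) u) :
    Continuous (Function.uncurry fu) := by
  have h1 : Function.uncurry fu =
      fun p : ℝ × ℝ => fderiv ℝ (Function.uncurry f) p ((0 : ℝ), (1 : ℝ)) := by
    funext ⟨t, u⟩
    have hd : HasFDerivAt (Function.uncurry f) (fderiv ℝ (Function.uncurry f) (t, u)) (t, u) :=
      ((hf.differentiable (by norm_num)) (t, u)).hasFDerivAt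
    have hc : HasDerivAt (fun v : ℝ => (t, v)) ((0 : ℝ), (1 : ℝ)) u :=
      (hasDerivAt_const u t).prodMk (hasDerivAt_id u)
    exact (hfu t u).unique (hd.comp_hasDerivAt u hc)
  rw [h1]
  exact (hf.continuous_fderiv (by norm_num)).clm_apply continuous_const

/-- Uniform-in-time smallness of the variation of `G t` near a periodic curve `w`:
compactness of one period, then periodicity. -/
lemma exists_uniform_gap {G : ℝ → ℝ → ℝ} {w : ℝ → ℝ} {T c : ℝ} (hT : 0 < T) (hc : 0 < c)
    (hG : Continuous (Function.uncurry G)) (hw : Continuous w)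
    (hGper : ∀ t u, G (t + T) u = G t u) (hwper : ∀ t, w (t + T) = w t) :
    ∃ r > 0, ∀ t s : ℝ, |s| < r → G t (w t) - G t (w t - s) < c := by
  have hcont : Continuous fun p : ℝ × ℝ => G p.2 (w p.2) - G p.2 (w p.2 - p.1) := by
    have h1 : Continuous fun p : ℝ × ℝ => G p.2 (w p.2) :=
      hG.comp (continuous_snd.prodMk (hw.comp continuous_snd))
    have h2 : Continuous fun p : ℝ × ℝ => G p.2 (w p.2 - p.1) :=
      hG.comp (continuous_snd.prodMk ((hw.comp continuous_snd).sub continuous_fst))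
    exact h1.sub h2
  have hev : ∀ᶠ s in 𝓝 (0 : ℝ), ∀ t ∈ Icc 0 T, G t (w t) - G t (w t - s) < c := by
    apply isCompact_Icc.eventually_forall_of_forall_eventually
    intro t _
    exact hcont.continuousAt.eventually_lt continuousAt_const (by simpa using hc)
  obtain ⟨r, hr, h⟩ := Metric.eventually_nhds_iff.1 hev
  refine ⟨r, hr, fun t s hs => ?_⟩
  have hp : Function.Periodic (fun t => G t (w t) - G t (w t - s)) T := fun t => by
    simp only [hGper, hwper]
  obtain ⟨y, hy, hty⟩ := hp.exists_mem_Ico₀ hT t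
  have h' := h (y := s) (by simpa using hs) y (Ico_subset_Icc_self hy)
  linarith

/-- If the periodic eigenvalue `μ̄` of a `T`-periodic ODE solution `ω̄` is negative, then the
functions `φ_n = ω̄ − (ε₀/n)φ̄` are, for a suitable `ε₀ > 0`, strict `T`-periodic
supersolutions of the ODE lying below `ω̄` and converging uniformly to `ω̄`. -/
theorem strict_periodic_supersolutions_below
    (f : ℝ → ℝ → ℝ) (T : ℝ) (hT : 0 < T)
    (hf : ContDiff ℝ 2 (Function.uncurry f))
    (hfper : ∀ t u : ℝ, f (t + T) u = f t u)
    (fu : ℝ → ℝ → ℝ)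
    (hfu : ∀ t u : ℝ, HasDerivAt (fun v => f t v) (fu t u) u)
    (ωb : ℝ → ℝ)
    (hωode : ∀ t : ℝ, HasDerivAt ωb (f t (ωb t)) t)
    (hωper : ∀ t : ℝ, ωb (t + T) = ωb t)
    (μ : ℝ) (hμ : μ = -(1 / T) * ∫ t in (0:ℝ)..T, fu t (ωb t))
    (hμneg : μ < 0)
    (φ : ℝ → ℝ)
    (hφ : ∀ t : ℝ, φ t = Real.exp ((∫ s in (0:ℝ)..t, fu s (ωb s)) -
      (t / T) * ∫ s in (0:ℝ)..T, fu s (ωb s))) :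
    ∃ ε₀ > (0:ℝ),
      (∀ n : ℕ, 1 ≤ n → ∀ t : ℝ,
        (ωb (t + T) - (ε₀ / n) * φ (t + T) = ωb t - (ε₀ / n) * φ t) ∧
        f t (ωb t - (ε₀ / n) * φ t) < deriv (fun s => ωb s - (ε₀ / n) * φ s) t ∧
        ωb t - (ε₀ / n) * φ t < ωb t) ∧
      TendstoUniformly (fun (n : ℕ) (t : ℝ) => ωb t - (ε₀ / n) * φ t) ωb atTop := by
  have hFc := continuous_partial hf hfu
  have hωc : Continuous ωb := continuous_iff_continuousAt.2 fun t => (hωode t).continuousAt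
  have hgc : Continuous fun t => fu t (ωb t) := hFc.comp (continuous_id.prodMk hωc)
  have hfuper : ∀ t u, fu (t + T) u = fu t u := fun t u => by
    have h := hfu (t + T) u
    simp only [hfper] at h
    exact h.unique (hfu t u)
  have hgper : Function.Periodic (fun t => fu t (ωb t)) T := fun t => by
    simp only [hfuper, hωper]
  have hφpos : ∀ t, 0 < φ t := fun t => by rw [hφ]; exact Real.exp_pos _
  have hφper : Function.Periodic φ T := fun t => by
    rw [hφ, hφ, ← intervalIntegral.integral_add_adjacent_intervals
      (hgc.intervalIntegrable 0 t) (hgc.intervalIntegrable t (t + T)),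
      hgper.intervalIntegral_add_eq t 0, zero_add]
    congr 1
    field_simp
    ring
  have hφd : ∀ t, HasDerivAt φ ((fu t (ωb t) + μ) * φ t) t := fun t => by
    have h1 : HasDerivAt (fun t => ∫ s in (0:ℝ)..t, fu s (ωb s)) (fu t (ωb t)) t :=
      hgc.integral_hasStrictDerivAt 0 t |>.hasDerivAt
    have h2 : HasDerivAt (fun t => (t / T) * ∫ s in (0:ℝ)..T, fu s (ωb s))
        (1 / T * ∫ s in (0:ℝ)..T, fu s (ωb s)) t :=
      ((hasDerivAt_id t).div_const T).mul_const _
    have h3 := (h1.sub h2).exp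
    rw [show φ = _ from funext hφ]
    refine h3.congr_deriv ?_
    rw [hμ]
    simp only [Pi.sub_apply]
    ring
  have hφc : Continuous φ := continuous_iff_continuousAt.2 fun t => (hφd t).continuousAt
  obtain ⟨M, hM⟩ : ∃ M, ∀ t, φ t ≤ M := by
    obtain ⟨M, hM⟩ := (isCompact_Icc (a := 0) (b := T)).bddAbove_image hφc.continuousOn
    refine ⟨M, fun t => ?_⟩
    obtain ⟨y, hy, hty⟩ := hφper.exists_mem_Ico₀ hT t
    rw [hty]
    exact hM (mem_image_of_mem φ (Ico_subset_Icc_self hy))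
  have hMpos : 0 < M := (hφpos 0).trans_le (hM 0)
  obtain ⟨r, hr, hgap⟩ := exists_uniform_gap hT (neg_pos.2 hμneg) hFc hωc hfuper hωper
  have hε : 0 < r / (2 * M) := by positivity
  refine ⟨r / (2 * M), hε, fun n hn t => ?_, ?_⟩
  · have hn1 : (1 : ℝ) ≤ n := by exact_mod_cast hn
    have hδ : 0 < r / (2 * M) / n := by positivity
    have hδle : r / (2 * M) / n ≤ r / (2 * M) := div_le_self hε.le hn1
    generalize r / (2 * M) / (n : ℝ) = δ at hδ hδle
    have hδφ : 0 < δ * φ t := mul_pos hδ (hφpos t)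
    have hδφr : δ * φ t < r := by
      calc δ * φ t ≤ r / (2 * M) * M :=
            mul_le_mul hδle (hM t) (hφpos t).le hε.le
        _ = r / 2 := by field_simp
        _ < r := by linarith
    refine ⟨by rw [hωper, hφper t], ?_, by linarith⟩
    have hd : HasDerivAt (fun s => ωb s - δ * φ s)
        (f t (ωb t) - δ * ((fu t (ωb t) + μ) * φ t)) t :=
      (hωode t).sub ((hφd t).const_mul δ)
    rw [hd.deriv]
    obtain ⟨ξ, ⟨hξ1, hξ2⟩, hξ⟩ := exists_hasDerivAt_eq_slope (fun v => f t v) (fu t)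
      (show ωb t - δ * φ t < ωb t by linarith)
      (fun x _ => (hfu t x).continuousAt.continuousWithinAt) (fun x _ => hfu t x)
    rw [eq_div_iff (by linarith)] at hξ
    have hg := hgap t (ωb t - ξ) (by rw [abs_lt]; constructor <;> linarith)
    rw [sub_sub_cancel] at hg
    nlinarith [mul_pos hδφ (show 0 < -μ - (fu t (ωb t) - fu t ξ) by linarith)]
  · rw [Metric.tendstoUniformly_iff]
    intro e he
    have hlim : Tendsto (fun n : ℕ => r / (2 * M) / (n : ℝ) * M) atTop (𝓝 0) := by
      simpa using (tendsto_const_div_atTop_nhds_zero_nat (r / (2 * M))).mul_const M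
    filter_upwards [hlim.eventually_lt_const he] with n hn t
    have h0 : 0 ≤ r / (2 * M) / (n : ℝ) := by positivity
    rw [Real.dist_eq, sub_sub_cancel, abs_of_nonneg (mul_nonneg h0 (hφpos t).le)]
    exact (mul_le_mul_of_nonneg_left (hM t) h0).trans_lt hn

end
end
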